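/- arXiv:1301.5206 — 4 statements merged into one kernel-verified Lean document; each statement's English description precedes it below -/
import Mathlib

section
/- Let C be an abelian category and (A, B) a cotorsion pair in C such that A is generating (every object of C is a quotient of an object of A) and B is cogenerating (every object of C embeds into an object of B). Then the following are equivalent: (1) Extⁿ_C(A, B) = 0 for all A ∈ A, B ∈ B and all n ≥ 1; (2) Ext²_C(A, B) = 0 for all A ∈ A and B ∈ B; (3) for every epimorphism f : A₁ → A₂ with A₁, A₂ ∈ A, also ker f ∈ A; (4) for every monomorphism g : B₁ → B₂ with B₁, B₂ ∈ B, also coker g ∈ B. -/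
open CategoryTheory CategoryTheory.Limits

universe w v u

variable {C : Type u} [Category.{v} C] [Abelian C]

/-- `Ext¹(A, B) = 0`, phrased as: every short exact sequence `0 → B → E → A → 0`
splits. -/
def Ext1Zero (A B : C) : Prop :=
  ∀ (E : C) (i : B ⟶ E) (p : E ⟶ A) (w : i ≫ p = 0),
    (ShortComplex.mk i p w).ShortExact → ∃ s : A ⟶ E, s ≫ p = 𝟙 A

/-- The right `Ext¹`-orthogonal class `S^⊥` of a class of objects `S`. -/
def rightPerp (S : Set C) : Set C := {B | ∀ A ∈ S, Ext1Zero A B}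

/-- The left `Ext¹`-orthogonal class `⊥S` of a class of objects `S`. -/
def leftPerp (S : Set C) : Set C := {A | ∀ B ∈ S, Ext1Zero A B}

/-- `(𝓐, 𝓑)` is a cotorsion pair: `𝓐 = ⊥𝓑` and `𝓑 = 𝓐^⊥`. -/
structure IsCotorsionPair (𝓐 𝓑 : Set C) : Prop where
  left_eq : 𝓐 = leftPerp 𝓑
  right_eq : 𝓑 = rightPerp 𝓐


namespace CotorsionAux

open CategoryTheory.Abelian

section

open HomologicalComplex DerivedCategory

/-- A quasi-isomorphism onto `X[0]` from a complex in degrees `≤ 0` gives an epi `K⁰ → X`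
through which the map of complexes factors. -/
lemma exists_epi_single {X : C} {K : CochainComplex C ℤ} {i : ℤ}
    (π : K ⟶ (HomologicalComplex.single C (ComplexShape.up ℤ) i).obj X) [K.IsStrictlyLE i] [QuasiIsoAt π i] :
    ∃ (P : C) (p : P ⟶ X) (s : (HomologicalComplex.single C (ComplexShape.up ℤ) i).obj P ⟶ K),
      Epi p ∧ s ≫ π = (HomologicalComplex.single C (ComplexShape.up ℤ) i).map p := by
  let e := K.iCyclesIso i (i + 1) (by simp)
    ((K.isZero_of_isStrictlyLE i (i + 1) (by simp)).eq_of_tgt _ _)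
  let α : K.X i ⟶ X :=
    e.inv ≫ K.homologyπ i ≫ homologyMap π i ≫ (singleObjHomologySelfIso _ _ _).hom
  have hα : Epi α := by
    have : IsIso (homologyMap π i) := inferInstance
    dsimp only [α]
    exact epi_comp' inferInstance (epi_comp' inferInstance
      (epi_comp' (@IsIso.epi_of_iso _ _ _ _ _ this) inferInstance))
  have h : π.f i = α ≫ (singleObjXSelf (ComplexShape.up ℤ) i X).inv := by
    rw [← cancel_epi e.hom]
    dsimp only [α, e]
    simp only [Category.assoc]
    rw [Iso.hom_inv_id_assoc, iCyclesIso_hom, homologyπ_naturality_assoc]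
    rw [homologyπ_singleObjHomologySelfIso_hom_assoc]
    rw [← singleObjCyclesSelfIso_inv_iCycles]
    rw [Iso.hom_inv_id_assoc]
    rw [← cyclesMap_i]
  refine ⟨K.X i, α, mkHomFromSingle (𝟙 _) (by
      rintro _ rfl
      apply (K.isZero_of_isStrictlyLE i (i + 1) (by simp)).eq_of_tgt), hα, ?_⟩
  apply HomologicalComplex.from_single_hom_ext
  rw [comp_f, mkHomFromSingle_f, h]
  rw [single_map_f_self]
  simp

lemma efface_derived [HasDerivedCategory.{w} C] {X : C}
    {L : CochainComplex C ℤ} {i : ℤ}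
    (φ : Q.obj ((HomologicalComplex.single C (ComplexShape.up ℤ) i).obj X) ⟶ Q.obj L)
    (n : ℤ) (hn : n < i) [L.IsStrictlyLE n] :
    ∃ (P : C) (p : P ⟶ X), Epi p ∧
      Q.map ((HomologicalComplex.single C (ComplexShape.up ℤ) i).map p) ≫ φ = 0 := by
  obtain ⟨K, _, π, h, g, rfl⟩ := right_fac_of_isStrictlyLE φ i
  have h' := h
  rw [isIso_Q_map_iff_quasiIso] at h'
  obtain ⟨P, p, s, hp, hs⟩ := @exists_epi_single _ _ _ X K i π _ (h'.quasiIsoAt i)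
  refine ⟨P, p, hp, ?_⟩
  have h₂ : s ≫ g = 0 := by
    apply HomologicalComplex.from_single_hom_ext
    apply (L.isZero_of_isStrictlyLE n i hn).eq_of_tgt
  rw [← hs, Q.map_comp, Category.assoc, IsIso.hom_inv_id_assoc, ← Q.map_comp, h₂, Q.map_zero]

lemma efface [HasExt.{w} C] {X Y : C} {n : ℕ} (x : Ext.{w} X Y (n + 1)) :
    ∃ (P : C) (p : P ⟶ X), Epi p ∧ (Ext.mk₀ p).comp x (zero_add _) = 0 := by
  let := HasDerivedCategory.standard C
  let ψ := x.hom ≫ (((singleFunctors C).shiftIso ((n + 1 : ℕ) : ℤ) (-((n + 1 : ℕ) : ℤ)) 0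
    (by lia)).hom.app Y)
  obtain ⟨P, p, hp, h⟩ := efface_derived (i := 0)
    (L := (CochainComplex.singleFunctor C (-((n + 1 : ℕ) : ℤ))).obj Y) ψ
      (-((n + 1 : ℕ) : ℤ)) (by lia)
  refine ⟨P, p, hp, ?_⟩
  apply Ext.homEquiv.injective
  change Ext.hom _ = Ext.hom _
  rw [Ext.comp_hom, Ext.zero_hom, Ext.mk₀_hom, ShiftedHom.mk₀_comp]
  rw [← cancel_mono (((singleFunctors C).shiftIso ((n + 1 : ℕ) : ℤ) (-((n + 1 : ℕ) : ℤ)) 0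
    (by lia)).hom.app Y), Limits.zero_comp, Category.assoc]
  exact h

end

lemma kernel_shortExact {X Y : C} (f : X ⟶ Y) [Epi f] :
    (ShortComplex.mk _ _ (kernel.condition f)).ShortExact :=
  { exact := ShortComplex.exact_kernel f }

lemma cokernel_shortExact {X Y : C} (f : X ⟶ Y) [Mono f] :
    (ShortComplex.mk _ _ (cokernel.condition f)).ShortExact :=
  { exact := ShortComplex.exact_cokernel f }

/-- Pushout of a short exact sequence. -/
lemma exists_pushout {S : ShortComplex C} (hS : S.ShortExact) {Y : C} (f : S.X₁ ⟶ Y) :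
    ∃ (E : C) (i : Y ⟶ E) (q : E ⟶ S.X₃) (j : S.X₂ ⟶ E) (w : i ≫ q = 0),
      (ShortComplex.mk i q w).ShortExact ∧ S.f ≫ j = f ≫ i ∧ j ≫ q = S.g := by
  have := hS.mono_f
  have := hS.epi_g
  let q : pushout S.f f ⟶ S.X₃ := pushout.desc S.g 0 (by simp)
  have hq : pushout.inl S.f f ≫ q = S.g := pushout.inl_desc _ _ _
  have hq' : pushout.inr S.f f ≫ q = 0 := pushout.inr_desc _ _ _
  have : Epi q := by
    have : Epi (pushout.inl S.f f ≫ q) := by rw [hq]; infer_instance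
    exact epi_of_epi (pushout.inl S.f f) q
  refine ⟨pushout S.f f, pushout.inr _ _, q, pushout.inl _ _, hq', ?_, pushout.condition, hq⟩
  refine { exact := ?_, mono_f := inferInstance, epi_g := this }
  refine ShortComplex.exact_of_g_is_cokernel _ (CokernelCofork.IsColimit.ofπ _ _
    (fun {Z} k hk => hS.gIsCokernel.desc (CokernelCofork.ofπ (pushout.inl S.f f ≫ k) ?_))
    ?_ ?_)
  · rw [← Category.assoc, pushout.condition, Category.assoc, hk, comp_zero]
  · intro Z k hk
    have h1 : S.g ≫ hS.gIsCokernel.desc (CokernelCofork.ofπ (pushout.inl S.f f ≫ k) (by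
        rw [← Category.assoc, pushout.condition, Category.assoc, hk, comp_zero])) =
        pushout.inl S.f f ≫ k := hS.gIsCokernel.fac _ WalkingParallelPair.one
    apply pushout.hom_ext
    · rw [← Category.assoc, hq]; exact h1
    · rw [← Category.assoc, hq', zero_comp]; exact hk.symm
  · intro Z k hk m hm
    rw [← cancel_epi q]
    refine hm.trans ?_
    have h1 : S.g ≫ hS.gIsCokernel.desc (CokernelCofork.ofπ (pushout.inl S.f f ≫ k) (by
        rw [← Category.assoc, pushout.condition, Category.assoc, hk, comp_zero])) =
        pushout.inl S.f f ≫ k := hS.gIsCokernel.fac _ WalkingParallelPair.one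
    apply pushout.hom_ext
    · rw [← Category.assoc, hq]; exact h1.symm
    · rw [← Category.assoc, hq', zero_comp]; exact hk

lemma exists_extClass [HasExt.{w} C] {X Y : C} (x : Ext.{w} X Y 1) :
    ∃ (E : C) (i : Y ⟶ E) (q : E ⟶ X) (w : i ≫ q = 0)
      (h : (ShortComplex.mk i q w).ShortExact), h.extClass = x := by
  obtain ⟨P, p, hp, h⟩ := efface x
  have hS := kernel_shortExact p
  obtain ⟨y, rfl⟩ := Ext.contravariant_sequence_exact₃ hS Y x h (n₀ := 0) rfl
  obtain ⟨f, rfl⟩ := Ext.mk₀_bijective _ _ |>.2 y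
  obtain ⟨E, i, q, j, hw, hE, h1, h2⟩ := exists_pushout hS f
  refine ⟨E, i, q, hw, hE, ?_⟩
  have := hS.extClass_naturality hE (ShortComplex.Hom.mk f j (𝟙 _) h1.symm
    (by simpa using h2))
  exact ((Ext.mk₀_id_comp _).symm.trans this.symm)

lemma efface_right [HasExt.{w} C] {X Y : C} (x : Ext.{w} X Y 1) :
    ∃ (E : C) (i : Y ⟶ E), Mono i ∧ x.comp (Ext.mk₀ i) (add_zero _) = 0 := by
  obtain ⟨E, i, q, hw, h, rfl⟩ := exists_extClass x
  exact ⟨E, i, h.mono_f, h.extClass_comp⟩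

lemma efface_right_two [HasExt.{w} C] {X Y : C} (x : Ext.{w} X Y 2) :
    ∃ (E : C) (i : Y ⟶ E), Mono i ∧ x.comp (Ext.mk₀ i) (add_zero _) = 0 := by
  obtain ⟨P, p, hp, h⟩ := efface x
  have hS := kernel_shortExact p
  obtain ⟨y, rfl⟩ := Ext.contravariant_sequence_exact₃ hS Y x h (n₀ := 1) rfl
  obtain ⟨E, i, hi, hy⟩ := efface_right y
  refine ⟨E, i, hi, ?_⟩
  rw [Ext.comp_assoc_of_third_deg_zero, hy, Ext.comp_zero]

lemma ext1Zero_iff [HasExt.{w} C] (A B : C) :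
    Ext1Zero A B ↔ Subsingleton (Ext.{w} A B 1) := by
  constructor
  · intro h
    refine subsingleton_of_forall_eq 0 fun x => ?_
    obtain ⟨E, i, q, hw, hE, rfl⟩ := exists_extClass x
    obtain ⟨s, hs⟩ := h E i q hw hE
    rw [← Ext.mk₀_id_comp hE.extClass]
    change (Ext.mk₀ (𝟙 A)).comp _ _ = _
    rw [← hs, ← Ext.mk₀_comp_mk₀_assoc]
    erw [hE.comp_extClass]
    rw [Ext.comp_zero]
  · intro _ E i q hw hE
    obtain ⟨s, hs⟩ := Ext.covariant_sequence_exact₃ A hE (Ext.mk₀ (𝟙 A)) (n₁ := 1) rfl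
      (Subsingleton.elim _ _)
    obtain ⟨s, rfl⟩ := Ext.mk₀_bijective _ _ |>.2 s
    refine ⟨s, (Ext.mk₀_bijective _ _).1 ?_⟩
    rw [← hs, Ext.mk₀_comp_mk₀]

end CotorsionAux

open CotorsionAux in
/-- Let `C` be an abelian category and `(𝓐, 𝓑)` a cotorsion pair such that `𝓐` is
generating and `𝓑` is cogenerating.  Then the following are equivalent:
(1) `Extⁿ_C(A, B) = 0` for all `A ∈ 𝓐`, `B ∈ 𝓑` and all `n ≥ 1`;
(2) `Ext²_C(A, B) = 0` for all `A ∈ 𝓐` and `B ∈ 𝓑`;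
(3) for every epimorphism `f : A₁ → A₂` with `A₁, A₂ ∈ 𝓐`, also `ker f ∈ 𝓐`;
(4) for every monomorphism `g : B₁ → B₂` with `B₁, B₂ ∈ 𝓑`, also `coker g ∈ 𝓑`. -/
theorem stmt_9 [HasExt.{w} C] (𝓐 𝓑 : Set C) (hpair : IsCotorsionPair 𝓐 𝓑)
    (hgen : ∀ X : C, ∃ A ∈ 𝓐, ∃ p : A ⟶ X, Epi p)
    (hcogen : ∀ X : C, ∃ B ∈ 𝓑, ∃ i : X ⟶ B, Mono i) :
    ((∀ A ∈ 𝓐, ∀ B ∈ 𝓑, ∀ n : ℕ, 1 ≤ n → Subsingleton (Abelian.Ext.{w} A B n)) ↔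
      (∀ A ∈ 𝓐, ∀ B ∈ 𝓑, Subsingleton (Abelian.Ext.{w} A B 2))) ∧
    ((∀ A ∈ 𝓐, ∀ B ∈ 𝓑, Subsingleton (Abelian.Ext.{w} A B 2)) ↔
      (∀ (A₁ A₂ : C) (f : A₁ ⟶ A₂), Epi f → A₁ ∈ 𝓐 → A₂ ∈ 𝓐 → kernel f ∈ 𝓐)) ∧
    ((∀ (A₁ A₂ : C) (f : A₁ ⟶ A₂), Epi f → A₁ ∈ 𝓐 → A₂ ∈ 𝓐 → kernel f ∈ 𝓐) ↔
      (∀ (B₁ B₂ : C) (g : B₁ ⟶ B₂), Mono g → B₁ ∈ 𝓑 → B₂ ∈ 𝓑 → cokernel g ∈ 𝓑)) := by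
  have hA : ∀ X, X ∈ 𝓐 ↔ ∀ B ∈ 𝓑, Subsingleton (Abelian.Ext.{w} X B 1) := fun X => by
    conv_lhs => rw [hpair.left_eq]
    simp only [leftPerp, Set.mem_ofPred_eq, ext1Zero_iff.{w}]
  have hB : ∀ Y, Y ∈ 𝓑 ↔ ∀ A ∈ 𝓐, Subsingleton (Abelian.Ext.{w} A Y 1) := fun X => by
    conv_lhs => rw [hpair.right_eq]
    simp only [rightPerp, Set.mem_ofPred_eq, ext1Zero_iff.{w}]
  have h23 : (∀ A ∈ 𝓐, ∀ B ∈ 𝓑, Subsingleton (Abelian.Ext.{w} A B 2)) →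
      (∀ (A₁ A₂ : C) (f : A₁ ⟶ A₂), Epi f → A₁ ∈ 𝓐 → A₂ ∈ 𝓐 → kernel f ∈ 𝓐) := by
    intro h A₁ A₂ f hf h₁ h₂
    rw [hA]
    intro B hBm
    refine subsingleton_of_forall_eq 0 fun x => ?_
    have := h A₂ h₂ B hBm
    obtain ⟨y, rfl⟩ := Abelian.Ext.contravariant_sequence_exact₁ (kernel_shortExact f) B x
      (n₁ := 2) rfl (Subsingleton.elim _ _)
    have := (hA A₁).1 h₁ B hBm
    rw [Subsingleton.elim (α := Abelian.Ext.{w} A₁ B 1) y 0, Abelian.Ext.comp_zero]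
  have h24 : (∀ A ∈ 𝓐, ∀ B ∈ 𝓑, Subsingleton (Abelian.Ext.{w} A B 2)) →
      (∀ (B₁ B₂ : C) (g : B₁ ⟶ B₂), Mono g → B₁ ∈ 𝓑 → B₂ ∈ 𝓑 → cokernel g ∈ 𝓑) := by
    intro h B₁ B₂ g hg h₁ h₂
    rw [hB]
    intro A hAm
    refine subsingleton_of_forall_eq 0 fun x => ?_
    have := h A hAm B₁ h₁
    obtain ⟨y, rfl⟩ := Abelian.Ext.covariant_sequence_exact₃ A (cokernel_shortExact g) x
      (n₁ := 2) rfl (Subsingleton.elim _ _)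
    have := (hB B₂).1 h₂ A hAm
    rw [Subsingleton.elim (α := Abelian.Ext.{w} A B₂ 1) y 0, Abelian.Ext.zero_comp]
  have h31 : (∀ (A₁ A₂ : C) (f : A₁ ⟶ A₂), Epi f → A₁ ∈ 𝓐 → A₂ ∈ 𝓐 → kernel f ∈ 𝓐) →
      (∀ A ∈ 𝓐, ∀ B ∈ 𝓑, ∀ n : ℕ, 1 ≤ n → Subsingleton (Abelian.Ext.{w} A B n)) := by
    intro h A hAm B hBm n hn
    induction n, hn using Nat.le_induction generalizing A with
    | base => exact (hA A).1 hAm B hBm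
    | succ n hn ih =>
      refine subsingleton_of_forall_eq 0 fun x => ?_
      obtain ⟨P, p, hp, hx⟩ := efface x
      obtain ⟨A', hA', p', hp'⟩ := hgen P
      have hx' : (Abelian.Ext.mk₀ (p' ≫ p)).comp x (zero_add _) = 0 := by
        rw [← Abelian.Ext.mk₀_comp_mk₀_assoc, hx, Abelian.Ext.comp_zero]
      obtain ⟨y, rfl⟩ := Abelian.Ext.contravariant_sequence_exact₃
        (kernel_shortExact (p' ≫ p)) B x hx' (n₀ := n) (by lia)
      have := ih (kernel (p' ≫ p)) (h _ _ _ inferInstance hA' hAm)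
      rw [Subsingleton.elim (α := Abelian.Ext.{w} (kernel (p' ≫ p)) B n) y 0,
        Abelian.Ext.comp_zero]
  have h42 : (∀ (B₁ B₂ : C) (g : B₁ ⟶ B₂), Mono g → B₁ ∈ 𝓑 → B₂ ∈ 𝓑 → cokernel g ∈ 𝓑) →
      (∀ A ∈ 𝓐, ∀ B ∈ 𝓑, Subsingleton (Abelian.Ext.{w} A B 2)) := by
    intro h A hAm B hBm
    refine subsingleton_of_forall_eq 0 fun x => ?_
    obtain ⟨E, i, hi, hx⟩ := efface_right_two x
    obtain ⟨B', hB', i', hi'⟩ := hcogen E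
    have hx' : x.comp (Abelian.Ext.mk₀ (i ≫ i')) (add_zero _) = 0 := by
      rw [← Abelian.Ext.mk₀_comp_mk₀, ← Abelian.Ext.comp_assoc_of_third_deg_zero, hx,
        Abelian.Ext.zero_comp]
    obtain ⟨y, rfl⟩ := Abelian.Ext.covariant_sequence_exact₁ A
      (cokernel_shortExact (i ≫ i')) x hx' (n₀ := 1) rfl
    have := (hB (cokernel (i ≫ i'))).1 (h _ _ _ inferInstance hBm hB') A hAm
    rw [Subsingleton.elim (α := Abelian.Ext.{w} A (cokernel (i ≫ i')) 1) y 0,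
      Abelian.Ext.zero_comp]
  have h12 : (∀ A ∈ 𝓐, ∀ B ∈ 𝓑, ∀ n : ℕ, 1 ≤ n → Subsingleton (Abelian.Ext.{w} A B n)) →
      (∀ A ∈ 𝓐, ∀ B ∈ 𝓑, Subsingleton (Abelian.Ext.{w} A B 2)) :=
    fun h A hA B hB => h A hA B hB 2 (by lia)
  exact ⟨⟨h12, fun h => h31 (h23 h)⟩, ⟨h23, fun h => h12 (h31 h)⟩,
    ⟨fun h => h24 (h12 (h31 h)), fun h => h23 (h42 h)⟩⟩
end

section
/- (Horseshoe Lemma for cotorsion pairs.) Let C be an abelian category and (A, B) a complete hereditary cotorsion pair in C. Given a short exact sequence 0 → X → Y → Z → 0 in C and short exact sequences 0 → X → B_X → A_X → 0 and 0 → Z → B_Z → A_Z → 0 with A_X, A_Z ∈ A and B_X, B_Z ∈ B, there exist a short exact sequence 0 → Y → B_Y → A_Y → 0 with A_Y ∈ A and B_Y ∈ B, together with short exact sequences 0 → B_X → B_Y → B_Z → 0 and 0 → A_X → A_Y → A_Z → 0, such that all the resulting squares of the 3×3 diagram commute. -/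
open CategoryTheory CategoryTheory.Limits

universe v u

variable {C : Type u} [Category.{v} C] [Abelian C]

/-- `(𝓐, 𝓑)` is a complete cotorsion pair: a cotorsion pair admitting approximation
sequences `0 → X → B_X → A_X → 0` and `0 → B^X → A^X → X → 0` for every object `X`. -/
structure IsCompleteCotorsionPair (𝓐 𝓑 : Set C) extends IsCotorsionPair 𝓐 𝓑 : Prop where
  approx₁ : ∀ X : C, ∃ (B A : C) (i : X ⟶ B) (p : B ⟶ A) (w : i ≫ p = 0),
    (ShortComplex.mk i p w).ShortExact ∧ B ∈ 𝓑 ∧ A ∈ 𝓐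
  approx₂ : ∀ X : C, ∃ (B A : C) (i : B ⟶ A) (p : A ⟶ X) (w : i ≫ p = 0),
    (ShortComplex.mk i p w).ShortExact ∧ B ∈ 𝓑 ∧ A ∈ 𝓐


universe w

/-- `(𝓐, 𝓑)` is a hereditary pair: `Extⁿ(A, B) = 0` for all `A ∈ 𝓐`, `B ∈ 𝓑`, `n ≥ 1`. -/
def IsHereditary [HasExt.{w} C] (𝓐 𝓑 : Set C) : Prop :=
  ∀ A ∈ 𝓐, ∀ B ∈ 𝓑, ∀ n : ℕ, 1 ≤ n → Subsingleton (Abelian.Ext.{w} A B n)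


open CategoryTheory.Abelian

/-- Pushout of a short exact sequence along a morphism out of the first term. -/
lemma exists_pushout_shortExact {A B D W : C} (f : A ⟶ B) (g : B ⟶ D) (w : f ≫ g = 0)
    (h : (ShortComplex.mk f g w).ShortExact) (u : A ⟶ W) :
    ∃ (E : C) (i : W ⟶ E) (p : E ⟶ D) (w' : i ≫ p = 0) (q : B ⟶ E),
      (ShortComplex.mk i p w').ShortExact ∧ f ≫ q = u ≫ i ∧ q ≫ p = g := by
  have : Mono f := h.mono_f
  have : Epi g := h.epi_g
  obtain ⟨p, hp₁, hp₂⟩ : ∃ p : pushout u f ⟶ D, pushout.inl u f ≫ p = 0 ∧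
      pushout.inr u f ≫ p = g :=
    ⟨pushout.desc 0 g (by rw [w, comp_zero]), pushout.inl_desc _ _ _, pushout.inr_desc _ _ _⟩
  refine ⟨pushout u f, pushout.inl u f, p, hp₁, pushout.inr u f, ?_,
    pushout.condition.symm, hp₂⟩
  have : Epi p := epi_of_epi_fac (f := pushout.inr u f) (h := g) hp₂
  refine { exact := ?_, mono_f := by dsimp; infer_instance, epi_g := by dsimp; infer_instance }
  apply ShortComplex.exact_of_g_is_cokernel
  have key : ∀ {T : C} (k : pushout u f ⟶ T), pushout.inl u f ≫ k = 0 →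
      ∃ l : D ⟶ T, p ≫ l = k := by
    intro T k hk
    have h0 : f ≫ pushout.inr u f ≫ k = 0 := by
      rw [← Category.assoc, ← pushout.condition, Category.assoc, hk, comp_zero]
    obtain ⟨l, hl⟩ : ∃ l, g ≫ l = pushout.inr u f ≫ k := ⟨_, h.exact.g_desc _ h0⟩
    refine ⟨l, ?_⟩
    apply pushout.hom_ext
    · rw [← Category.assoc, hp₁, zero_comp, hk]
    · rw [← Category.assoc, hp₂, hl]
  exact CokernelCofork.IsColimit.ofπ _ _
    (fun k hk => (key k hk).choose) (fun k hk => (key k hk).choose_spec)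
    (fun k hk m hm => by
      rw [← cancel_epi p]
      exact Eq.trans hm (key k hk).choose_spec.symm)

/-- A short exact sequence whose class vanishes splits. -/
lemma ext1Zero_of_subsingleton [HasExt.{w} C] {A B : C} (h : ∀ x : Ext.{w} A B 1, x = 0) :
    Ext1Zero A B := by
  intro E i p wp hS
  obtain ⟨x, hx⟩ := Ext.covariant_sequence_exact₃ A hS (Ext.mk₀ (𝟙 A)) (zero_add 1) (h _)
  obtain ⟨s, rfl⟩ := (Ext.mk₀_bijective A E).2 x
  refine ⟨s, ?_⟩
  apply (Ext.mk₀_bijective A A).1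
  rw [← hx]
  exact (Ext.mk₀_comp_mk₀ _ _).symm

/-- The cokernel row of a morphism of short exact sequences with monomorphic components. -/
lemma nine_cokernel_row {X Y Z BX BY BZ AX AY AZ : C}
    {f : X ⟶ Y} {g : Y ⟶ Z} {w : f ≫ g = 0} (h : (ShortComplex.mk f g w).ShortExact)
    {b₁ : BX ⟶ BY} {b₂ : BY ⟶ BZ} {wb : b₁ ≫ b₂ = 0}
    (hb : (ShortComplex.mk b₁ b₂ wb).ShortExact)
    {a₁ : AX ⟶ AY} {a₂ : AY ⟶ AZ} (wa : a₁ ≫ a₂ = 0)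
    {iX : X ⟶ BX} {pX : BX ⟶ AX} {wX : iX ≫ pX = 0}
    (hX : (ShortComplex.mk iX pX wX).ShortExact)
    {iY : Y ⟶ BY} {pY : BY ⟶ AY} {wY : iY ≫ pY = 0}
    (hY : (ShortComplex.mk iY pY wY).ShortExact)
    {iZ : Z ⟶ BZ} {pZ : BZ ⟶ AZ} {wZ : iZ ≫ pZ = 0}
    (hZ : (ShortComplex.mk iZ pZ wZ).ShortExact)
    (c₁ : f ≫ iY = iX ≫ b₁) (c₂ : g ≫ iZ = iY ≫ b₂)
    (c₃ : b₁ ≫ pY = pX ≫ a₁) (c₄ : b₂ ≫ pZ = pY ≫ a₂) :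
    (ShortComplex.mk a₁ a₂ wa).ShortExact := by
  have mf : Mono f := h.mono_f
  have eg : Epi g := h.epi_g
  have mb : Mono b₁ := hb.mono_f
  have eb : Epi b₂ := hb.epi_g
  have mX : Mono iX := hX.mono_f
  have mY : Mono iY := hY.mono_f
  have mZ : Mono iZ := hZ.mono_f
  have eX : Epi pX := hX.epi_g
  have eY : Epi pY := hY.epi_g
  have eZ : Epi pZ := hZ.epi_g
  have key₁ : Mono a₁ := by
    refine Preadditive.mono_of_cancel_zero _ fun {T} x hx => ?_
    obtain ⟨T', π, hπ, y, hy⟩ := surjective_up_to_refinements_of_epi pX x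
    have h1 : (y ≫ b₁) ≫ pY = 0 := by
      rw [Category.assoc, c₃, ← Category.assoc, ← hy, Category.assoc, hx, comp_zero]
    obtain ⟨z, hz⟩ : ∃ z, z ≫ iY = y ≫ b₁ := ⟨_, hY.exact.lift_f _ h1⟩
    have h2 : z ≫ g = 0 := by
      rw [← cancel_mono iZ, Category.assoc, c₂, ← Category.assoc, hz, Category.assoc, wb]
      simp
    obtain ⟨t, ht⟩ : ∃ t, t ≫ f = z := ⟨_, h.exact.lift_f _ h2⟩
    have h3 : t ≫ iX = y := by
      rw [← cancel_mono b₁, Category.assoc, ← c₁, ← Category.assoc, ht, hz]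
    rw [← cancel_epi π, hy, ← h3, Category.assoc, wX]
    simp
  have key₂ : Epi a₂ := epi_of_epi_fac (f := pY) (h := b₂ ≫ pZ) c₄.symm
  refine { exact := ?_, mono_f := key₁, epi_g := key₂ }
  rw [ShortComplex.exact_iff_exact_up_to_refinements]
  intro T x hx
  dsimp at x hx
  obtain ⟨T', π, hπ, y, hy⟩ := surjective_up_to_refinements_of_epi pY x
  have h1 : (y ≫ b₂) ≫ pZ = 0 := by
    rw [Category.assoc, c₄, ← Category.assoc, ← hy, Category.assoc, hx, comp_zero]
  obtain ⟨z, hz⟩ : ∃ z, z ≫ iZ = y ≫ b₂ := ⟨_, hZ.exact.lift_f _ h1⟩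
  obtain ⟨T'', π', hπ', s, hs⟩ := surjective_up_to_refinements_of_epi g z
  have h2 : (π' ≫ y - s ≫ iY) ≫ b₂ = 0 := by
    rw [Preadditive.sub_comp, Category.assoc, Category.assoc, ← hz, ← c₂, ← Category.assoc, hs]
    simp
  obtain ⟨t, ht⟩ : ∃ t, t ≫ b₁ = π' ≫ y - s ≫ iY := ⟨_, hb.exact.lift_f _ h2⟩
  refine ⟨T'', π' ≫ π, inferInstance, t ≫ pX, ?_⟩
  dsimp
  rw [Category.assoc, Category.assoc, ← c₃, ← Category.assoc t, ht, hy, Preadditive.sub_comp,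
    Category.assoc, Category.assoc, wY]
  simp

/-- **Horseshoe Lemma for cotorsion pairs.**  Let `(𝓐, 𝓑)` be a complete hereditary
cotorsion pair in an abelian category `C`.  Given a short exact sequence
`0 → X → Y → Z → 0` and approximation sequences `0 → X → B_X → A_X → 0` and
`0 → Z → B_Z → A_Z → 0` with `A_X, A_Z ∈ 𝓐` and `B_X, B_Z ∈ 𝓑`, there exist a short
exact sequence `0 → Y → B_Y → A_Y → 0` with `A_Y ∈ 𝓐`, `B_Y ∈ 𝓑`, together with short
exact sequences `0 → B_X → B_Y → B_Z → 0` and `0 → A_X → A_Y → A_Z → 0` making all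
squares of the resulting 3×3 diagram commute. -/
theorem stmt_10 [HasExt.{w} C] (𝓐 𝓑 : Set C)
    (hpair : IsCompleteCotorsionPair 𝓐 𝓑) (hher : IsHereditary 𝓐 𝓑)
    {X Y Z : C} (f : X ⟶ Y) (g : Y ⟶ Z) (w : f ≫ g = 0)
    (hse : (ShortComplex.mk f g w).ShortExact)
    {BX AX : C} (iX : X ⟶ BX) (pX : BX ⟶ AX) (wX : iX ≫ pX = 0)
    (hseX : (ShortComplex.mk iX pX wX).ShortExact) (hAX : AX ∈ 𝓐) (hBX : BX ∈ 𝓑)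
    {BZ AZ : C} (iZ : Z ⟶ BZ) (pZ : BZ ⟶ AZ) (wZ : iZ ≫ pZ = 0)
    (hseZ : (ShortComplex.mk iZ pZ wZ).ShortExact) (hAZ : AZ ∈ 𝓐) (hBZ : BZ ∈ 𝓑) :
    ∃ (BY AY : C) (iY : Y ⟶ BY) (pY : BY ⟶ AY) (wY : iY ≫ pY = 0),
      (ShortComplex.mk iY pY wY).ShortExact ∧ AY ∈ 𝓐 ∧ BY ∈ 𝓑 ∧
      ∃ (b₁ : BX ⟶ BY) (b₂ : BY ⟶ BZ) (wb : b₁ ≫ b₂ = 0),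
        (ShortComplex.mk b₁ b₂ wb).ShortExact ∧
        ∃ (a₁ : AX ⟶ AY) (a₂ : AY ⟶ AZ) (wa : a₁ ≫ a₂ = 0),
          (ShortComplex.mk a₁ a₂ wa).ShortExact ∧
          f ≫ iY = iX ≫ b₁ ∧ g ≫ iZ = iY ≫ b₂ ∧
          b₁ ≫ pY = pX ≫ a₁ ∧ b₂ ≫ pZ = pY ≫ a₂ := by

  have mX : Mono iX := hseX.mono_f
  have mZ : Mono iZ := hseZ.mono_f
  -- the class of the middle row
  obtain ⟨η, hη⟩ := Ext.contravariant_sequence_exact₁ hseZ BX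
    (hse.extClass.comp (Ext.mk₀ iX) (add_zero 1) : Ext.{w} Z BX 1) (n₁ := 2) rfl
    (@Subsingleton.elim _ (hher AZ hAZ BX hBX 2 (by norm_num)) _ _)
  -- realise it by a short exact sequence
  obtain ⟨B', A', i', p', w', hS', hB', hA'⟩ := hpair.approx₂ BZ
  obtain ⟨u', hu'⟩ := Ext.contravariant_sequence_exact₃ hS' BX η
    (@Subsingleton.elim _ (hher A' hA' BX hBX 1 le_rfl) _ _) (n₀ := 0) rfl
  obtain ⟨u, rfl⟩ := (Ext.mk₀_bijective B' BX).2 u'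
  obtain ⟨BY, b₁, b₂, wb, q, hb, hq₁, hq₂⟩ := exists_pushout_shortExact i' p' w' hS' u
  have hbη : hb.extClass = η := by
    rw [← hu']
    have := ShortComplex.ShortExact.extClass_naturality.{w} hS' hb
      { τ₁ := u, τ₂ := q, τ₃ := 𝟙 BZ, comm₁₂ := hq₁.symm, comm₂₃ := by simp [hq₂] }
    dsimp at this
    rw [Ext.mk₀_id_comp] at this
    exact this.symm
  subst hbη
  dsimp at hη
  -- extend `iX ≫ b₁` to `Y`
  obtain ⟨k', hk'⟩ := Ext.contravariant_sequence_exact₁ hse BY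
    (Ext.mk₀ (iX ≫ b₁)) (n₁ := 1) rfl (by
      rw [← Ext.mk₀_comp_mk₀, ← Ext.comp_assoc_of_third_deg_zero, ← hη,
        Ext.comp_assoc_of_third_deg_zero]
      have := hb.extClass_comp
      dsimp at this
      rw [this, Ext.comp_zero])
  obtain ⟨k, rfl⟩ := (Ext.mk₀_bijective Y BY).2 k'
  have hk : f ≫ k = iX ≫ b₁ := by
    apply (Ext.mk₀_bijective X BY).1
    rw [← hk']
    exact (Ext.mk₀_comp_mk₀ _ _).symm
  have hkb : f ≫ (k ≫ b₂) = 0 := by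
    rw [← Category.assoc, hk, Category.assoc, wb, comp_zero]
  have : Epi g := hse.epi_g
  obtain ⟨m, hm⟩ : ∃ m, g ≫ m = k ≫ b₂ := ⟨_, hse.exact.g_desc _ hkb⟩
  have hnat := ShortComplex.ShortExact.extClass_naturality.{w} hse hb
    { τ₁ := iX, τ₂ := k, τ₃ := m, comm₁₂ := hk.symm, comm₂₃ := hm.symm }
  dsimp at hnat
  obtain ⟨t', ht'⟩ := Ext.covariant_sequence_exact₃ Z hb (Ext.mk₀ (m + -iZ)) (n₁ := 1) rfl (by
    rw [Ext.mk₀_add, Ext.mk₀_neg, Ext.add_comp, Ext.neg_comp]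
    erw [← hnat, hη]
    exact add_neg_cancel _)
  obtain ⟨t, rfl⟩ := (Ext.mk₀_bijective Z BY).2 t'
  have ht : t ≫ b₂ = m + -iZ := by
    apply (Ext.mk₀_bijective Z BZ).1
    rw [← ht']
    exact (Ext.mk₀_comp_mk₀ _ _).symm
  obtain ⟨iY, c₁, c₂⟩ : ∃ iY : Y ⟶ BY, f ≫ iY = iX ≫ b₁ ∧ g ≫ iZ = iY ≫ b₂ := by
    refine ⟨k - g ≫ t, ?_, ?_⟩
    · rw [Preadditive.comp_sub, ← Category.assoc f g, w, hk]; simp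
    · rw [Preadditive.sub_comp, Category.assoc, ht, ← hm]; simp
  have mb : Mono b₁ := hb.mono_f
  have mY : Mono iY := by
    refine Preadditive.mono_of_cancel_zero _ fun {T} x hx => ?_
    have h1 : x ≫ g = 0 := by
      rw [← cancel_mono iZ, Category.assoc, c₂, ← Category.assoc, hx]; simp
    obtain ⟨y, hy⟩ : ∃ y, y ≫ f = x := by
      have : Mono f := hse.mono_f
      exact ⟨_, hse.exact.lift_f _ h1⟩
    have h2 : y = 0 := by
      rw [← cancel_mono iX, ← cancel_mono b₁, Category.assoc, ← c₁, ← Category.assoc, hy, hx]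
      simp
    rw [← hy, h2, zero_comp]
  have hY : (ShortComplex.mk iY (cokernel.π iY) (cokernel.condition iY)).ShortExact :=
    { exact := ShortComplex.exact_cokernel iY
      mono_f := mY
      epi_g := by dsimp; infer_instance }
  have : Epi pX := hseX.epi_g
  obtain ⟨a₁, c₃⟩ : ∃ a₁, pX ≫ a₁ = b₁ ≫ cokernel.π iY :=
    ⟨_, hseX.exact.g_desc (b₁ ≫ cokernel.π iY) (by
      dsimp
      rw [← Category.assoc, ← c₁, Category.assoc, cokernel.condition, comp_zero])⟩
  obtain ⟨a₂, c₄⟩ : ∃ a₂, cokernel.π iY ≫ a₂ = b₂ ≫ pZ :=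
    ⟨cokernel.desc iY (b₂ ≫ pZ) (by
      rw [← Category.assoc, ← c₂, Category.assoc, wZ, comp_zero]), by simp⟩
  have wa : a₁ ≫ a₂ = 0 := by
    rw [← cancel_epi pX, ← Category.assoc, c₃, Category.assoc, c₄, ← Category.assoc, wb]
    simp
  have ha : (ShortComplex.mk a₁ a₂ wa).ShortExact :=
    nine_cokernel_row hse hb wa hseX hY hseZ c₁ c₂ c₃.symm c₄.symm
  refine ⟨BY, cokernel iY, iY, cokernel.π iY, cokernel.condition iY, hY, ?_, ?_,
    b₁, b₂, wb, hb, a₁, a₂, wa, ha, c₁, c₂, c₃.symm, c₄.symm⟩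
  · rw [hpair.left_eq]
    intro B hB
    apply ext1Zero_of_subsingleton.{v, u, w}
    intro x
    obtain ⟨y, rfl⟩ := Ext.contravariant_sequence_exact₂ ha B x
      (@Subsingleton.elim _ (hher AX hAX B hB 1 le_rfl) _ _)
    rw [@Subsingleton.elim _ (hher AZ hAZ B hB 1 le_rfl) y 0, Ext.comp_zero]
  · rw [hpair.right_eq]
    intro A hA
    apply ext1Zero_of_subsingleton.{v, u, w}
    intro x
    obtain ⟨y, rfl⟩ := Ext.covariant_sequence_exact₂ A hb x
      (@Subsingleton.elim _ (hher A hA BZ hBZ 1 le_rfl) _ _)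
    rw [@Subsingleton.elim _ (hher A hA BX hBX 1 le_rfl) y 0, Ext.zero_comp]
end

section
/- Let C be an abelian category, X an object of C, n ∈ ℤ, and Y a cochain complex over C. Then there are injective homomorphisms of abelian groups Ext¹_C(X, Zⁿ(Y)) → Ext¹_{Ch(C)}(Sⁿ(X), Y) and Ext¹_C(Yⁿ/Bⁿ(Y), X) → Ext¹_{Ch(C)}(Y, Sⁿ(X)), natural in all variables, where Zⁿ(Y) = ker(dⁿ : Yⁿ → Y^{n+1}) and Bⁿ(Y) = im(d^{n-1} : Y^{n-1} → Yⁿ). If Y is acyclic, both homomorphisms are isomorphisms. -/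
open CategoryTheory CategoryTheory.Limits

universe w' w v u

variable {𝒜 : Type u} [Category.{v} 𝒜] [Abelian 𝒜]

/-- The cochain complex with the object `X` concentrated in degree `n`. -/
noncomputable def sph (n : ℤ) (X : 𝒜) : CochainComplex 𝒜 ℤ :=
  (HomologicalComplex.single 𝒜 (ComplexShape.up ℤ) n).obj X

/-- The functorial action of `Sⁿ(-)`. -/
noncomputable def sphMap (n : ℤ) {X X' : 𝒜} (f : X ⟶ X') : sph n X ⟶ sph n X' :=
  (HomologicalComplex.single 𝒜 (ComplexShape.up ℤ) n).map f

namespace Stmt12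

open CategoryTheory.Abelian

section General

variable {C : Type*} [Category* C] [Abelian C]

/-- Every class in `Ext¹(X, Y)` is killed by pulling back along some epimorphism. -/
lemma exists_epi_comp_eq_zero [HasExt.{w} C] {X Y : C} (e : Ext.{w} X Y 1) :
    ∃ (P : C) (p : P ⟶ X) (_ : Epi p), (Ext.mk₀ p).comp e (zero_add 1) = 0 := by
  let := HasDerivedCategory.standard C
  let sX : CochainComplex C ℤ := (CochainComplex.singleFunctor C 0).obj X
  let sY : CochainComplex C ℤ := (CochainComplex.singleFunctor C 0).obj Y
  let α : DerivedCategory.Q.obj sX ⟶ DerivedCategory.Q.obj (sY⟦(1 : ℤ)⟧) :=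
    (show DerivedCategory.Q.obj sX ⟶ (DerivedCategory.Q.obj sY)⟦(1 : ℤ)⟧ from e.hom) ≫
      ((DerivedCategory.Q (C := C)).commShiftIso (1 : ℤ)).inv.app sY
  obtain ⟨X', hX', s, hs, g, fac⟩ := DerivedCategory.right_fac_of_isStrictlyLE α 0
  have hqs : QuasiIso s := (DerivedCategory.isIso_Q_map_iff_quasiIso C s).1 hs
  let t : sX.X 0 ≅ X := HomologicalComplex.singleObjXSelf (.up ℤ) 0 X
  let p : X'.X 0 ⟶ X := s.f 0 ≫ t.hom
  have hz : IsZero (X'.X 1) := X'.isZero_of_isStrictlyLE 0 1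
  have hepi : Epi (s.f 0) := by
    have h1 : IsIso (HomologicalComplex.homologyMap s 0) := inferInstance
    have h2 : IsIso (HomologicalComplex.homologyπ sX 0) :=
      HomologicalComplex.isIso_homologyπ sX (-1) 0 (by simp) rfl
    have h3 : IsIso (HomologicalComplex.iCycles sX 0) :=
      HomologicalComplex.isIso_iCycles sX 0 1 (by simp) rfl
    have h4 : Epi (HomologicalComplex.cyclesMap s 0 ≫ HomologicalComplex.homologyπ sX 0) := by
      rw [← HomologicalComplex.homologyπ_naturality]
      infer_instance
    have h5 : Epi (HomologicalComplex.cyclesMap s 0) := by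
      have := epi_comp (HomologicalComplex.cyclesMap s 0 ≫ HomologicalComplex.homologyπ sX 0)
        (inv (HomologicalComplex.homologyπ sX 0))
      simpa using this
    have h6 : Epi (HomologicalComplex.iCycles X' 0 ≫ s.f 0) := by
      rw [← HomologicalComplex.cyclesMap_i]
      infer_instance
    exact epi_of_epi (HomologicalComplex.iCycles X' 0) (s.f 0)
  have hp : Epi p := epi_comp _ _
  refine ⟨X'.X 0, p, hp, ?_⟩
  let i : (CochainComplex.singleFunctor C 0).obj (X'.X 0) ⟶ X' :=
    HomologicalComplex.mkHomFromSingle (𝟙 _) (fun k hk => by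
      obtain rfl : k = 1 := by simpa using hk.symm
      exact hz.eq_of_tgt _ _)
  have hi : i ≫ s = (CochainComplex.singleFunctor C 0).map p := by
    apply HomologicalComplex.from_single_hom_ext
    change i.f 0 ≫ s.f 0 = ((HomologicalComplex.single C (.up ℤ) 0).map p).f 0
    rw [HomologicalComplex.single_map_f_self]
    have h1 : i.f 0 = (HomologicalComplex.singleObjXSelf (.up ℤ) 0 (X'.X 0)).hom ≫ 𝟙 _ :=
      HomologicalComplex.mkHomFromSingle_f _ _
    have h2 : p ≫ (HomologicalComplex.singleObjXSelf (.up ℤ) 0 X).inv = s.f 0 := by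
      change (s.f 0 ≫ t.hom) ≫ t.inv = _
      simp
    rw [h1, h2, Category.comp_id]
    rfl
  have hig : i ≫ g = 0 := by
    apply HomologicalComplex.from_single_hom_ext
    apply IsZero.eq_of_tgt
    exact HomologicalComplex.isZero_single_obj_X (.up ℤ) 0 Y (0 + 1) (by simp)
  have key : DerivedCategory.Q.map ((CochainComplex.singleFunctor C 0).map p) ≫ α = 0 := by
    rw [← hi, fac, Functor.map_comp, Category.assoc, IsIso.hom_inv_id_assoc,
      ← Functor.map_comp, hig, Functor.map_zero]
  ext
  rw [Ext.comp_hom, Ext.mk₀_hom, Ext.zero_hom, ShiftedHom.mk₀_comp]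
  let e' : DerivedCategory.Q.obj sX ⟶ (DerivedCategory.Q.obj sY)⟦(1 : ℤ)⟧ := e.hom
  let q := DerivedCategory.Q.map ((CochainComplex.singleFunctor C 0).map p)
  have key2 : (q ≫ e') ≫ ((DerivedCategory.Q (C := C)).commShiftIso (1 : ℤ)).inv.app sY = 0 :=
    (Category.assoc _ _ _).trans key
  have key3 : q ≫ e' = 0 := by
    rw [← cancel_mono (((DerivedCategory.Q (C := C)).commShiftIso (1 : ℤ)).inv.app sY), key2]
    exact zero_comp.symm
  exact key3

/-- The class of an extension. -/
noncomputable def cls [HasExt.{w} C] {X Y E : C} (i : Y ⟶ E) (p : E ⟶ X) (z : i ≫ p = 0)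
    (h : (ShortComplex.mk i p z).ShortExact) : Ext.{w} X Y 1 := h.extClass

section cls

variable [HasExt.{w} C] {X Y E : C} (i : Y ⟶ E) (p : E ⟶ X) (z : i ≫ p = 0)
    (h : (ShortComplex.mk i p z).ShortExact)

lemma cls_comp : (cls.{w} i p z h).comp (Ext.mk₀ i) (add_zero 1) = 0 := h.extClass_comp

lemma comp_cls : (Ext.mk₀ p).comp (cls.{w} i p z h) (zero_add 1) = 0 := h.comp_extClass

lemma cls_lift {A : C} (f : A ⟶ X) (hf : (Ext.mk₀ f).comp (cls.{w} i p z h) (zero_add 1) = 0) :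
    ∃ r : A ⟶ E, r ≫ p = f := by
  obtain ⟨r', hr'⟩ := Ext.covariant_sequence_exact₃ A h (Ext.mk₀ f) (zero_add 1) hf
  obtain ⟨r, rfl⟩ := (Ext.mk₀_bijective _ _).2 r'
  rw [Ext.mk₀_comp_mk₀] at hr'
  exact ⟨r, (Ext.mk₀_bijective _ _).1 hr'⟩

lemma cls_desc {A : C} (f : Y ⟶ A) (hf : (cls.{w} i p z h).comp (Ext.mk₀ f) (add_zero 1) = 0) :
    ∃ r : E ⟶ A, i ≫ r = f := by
  obtain ⟨r', hr'⟩ := Ext.contravariant_sequence_exact₁ h A (Ext.mk₀ f) (add_zero 1) hf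
  obtain ⟨r, rfl⟩ := (Ext.mk₀_bijective _ _).2 r'
  rw [Ext.mk₀_comp_mk₀] at hr'
  exact ⟨r, (Ext.mk₀_bijective _ _).1 hr'⟩

lemma cls_nat {X' Y' E' : C} (i' : Y' ⟶ E') (p' : E' ⟶ X') (z' : i' ≫ p' = 0)
    (h' : (ShortComplex.mk i' p' z').ShortExact) (a : Y ⟶ Y') (b : E ⟶ E') (c : X ⟶ X')
    (h₁ : a ≫ i' = i ≫ b) (h₂ : b ≫ p' = p ≫ c) :
    (cls.{w} i p z h).comp (Ext.mk₀ a) (add_zero 1) =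
      (Ext.mk₀ c).comp (cls.{w} i' p' z' h') (zero_add 1) := by
  let m : ShortComplex.mk i p z ⟶ ShortComplex.mk i' p' z' :=
    { τ₁ := a
      τ₂ := b
      τ₃ := c
      comm₁₂ := h₁
      comm₂₃ := h₂ }
  exact ShortComplex.ShortExact.extClass_naturality h h' m

lemma cls_map {D : Type*} [Category* D] [Abelian D] [HasExt.{w'} D] (F : C ⥤ D) [F.Additive]
    [PreservesFiniteLimits F] [PreservesFiniteColimits F] :
    ∃ (z' : F.map i ≫ F.map p = 0) (h' : (ShortComplex.mk (F.map i) (F.map p) z').ShortExact),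
      (cls.{w} i p z h).mapExactFunctor F = cls.{w'} (F.map i) (F.map p) z' h' :=
  ⟨by rw [← F.map_comp, z, F.map_zero], h.map_of_exact F, Ext.mapExactFunctor_extClass F h⟩

end cls

/-- Every class in `Ext¹(X, Y)` is the class of an extension. -/
lemma exists_extension [HasExt.{w} C] {X Y : C} (e : Ext.{w} X Y 1) :
    ∃ (E : C) (i : Y ⟶ E) (p : E ⟶ X) (z : i ≫ p = 0)
      (h : (ShortComplex.mk i p z).ShortExact), cls i p z h = e := by
  obtain ⟨P, p, hp, he⟩ := exists_epi_comp_eq_zero e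
  have hS : (ShortComplex.mk _ _ (kernel.condition p)).ShortExact :=
    { exact := ShortComplex.exact_kernel p }
  obtain ⟨φ', hφ'⟩ := Ext.contravariant_sequence_exact₃ hS Y e he (add_zero 1)
  obtain ⟨φ, hφ⟩ : ∃ φ : kernel p ⟶ Y, Ext.mk₀ φ = φ' := (Ext.mk₀_bijective _ _).2 φ'
  have he' : (cls _ _ _ hS).comp (Ext.mk₀ φ) (add_zero 1) = e := by
    rw [hφ]; exact hφ'
  have w0 : kernel.ι p ≫ p = φ ≫ (0 : Y ⟶ X) := by simp
  let q : pushout (kernel.ι p) φ ⟶ X := pushout.desc p 0 w0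
  have hq1 : pushout.inl (kernel.ι p) φ ≫ q = p := pushout.inl_desc _ _ _
  have hq2 : pushout.inr (kernel.ι p) φ ≫ q = 0 := pushout.inr_desc _ _ _
  have h1 : Epi q := by
    have : Epi (pushout.inl (kernel.ι p) φ ≫ q) := by rw [hq1]; exact hp
    exact epi_of_epi (pushout.inl (kernel.ι p) φ) _
  have h2 : Mono (pushout.inr (kernel.ι p) φ) := inferInstance
  have hS' : (ShortComplex.mk _ _ hq2).ShortExact :=
    { exact := by
        apply ShortComplex.exact_of_g_is_cokernel
        refine CokernelCofork.IsColimit.ofπ' _ _ (fun {A} k hk => ?_)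
        have hk0 : pushout.inr (kernel.ι p) φ ≫ k = 0 := hk
        have hk' : kernel.ι p ≫ pushout.inl (kernel.ι p) φ ≫ k = 0 := by
          rw [pushout.condition_assoc, hk0, comp_zero]
        refine ⟨hS.exact.desc (pushout.inl (kernel.ι p) φ ≫ k) hk', ?_⟩
        have hd : p ≫ hS.exact.desc (pushout.inl (kernel.ι p) φ ≫ k) hk' = _ :=
          hS.exact.g_desc _ hk'
        change q ≫ hS.exact.desc (pushout.inl (kernel.ι p) φ ≫ k) hk' = k
        apply pushout.hom_ext
        · rw [reassoc_of% hq1]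
          exact hd
        · rw [reassoc_of% hq2, hk0]
          exact zero_comp }
  refine ⟨_, _, _, hq2, hS', ?_⟩
  rw [← he', cls_nat _ _ _ hS _ _ hq2 hS' φ (pushout.inl (kernel.ι p) φ) (𝟙 X)
    pushout.condition.symm (by rw [hq1, Category.comp_id]), Ext.mk₀_id_comp]

end General

section Adj

variable {C : Type*} [Category* C] [Abelian C] {D : Type*} [Category* D] [Abelian D]

section Units

variable {F : C ⥤ D} {G : D ⥤ C} (adj : F ⊣ G)

/-- The counit of an adjunction, as a morphism `FGY ⟶ Y`. -/
def eps (Y : D) : F.obj (G.obj Y) ⟶ Y := adj.counit.app Y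

/-- The unit of an adjunction, as a morphism `X ⟶ GFX`. -/
def eta (X : C) : X ⟶ G.obj (F.obj X) := adj.unit.app X

lemma eps_nat {Y Y' : D} (g : Y ⟶ Y') : F.map (G.map g) ≫ eps adj Y' = eps adj Y ≫ g :=
  adj.counit_naturality g

lemma eta_nat {X X' : C} (g : X ⟶ X') : eta adj X ≫ G.map (F.map g) = g ≫ eta adj X' :=
  adj.unit_naturality g

lemma left_tri (X : C) : F.map (eta adj X) ≫ eps adj (F.obj X) = 𝟙 _ :=
  adj.left_triangle_components X

lemma right_tri (Y : D) : eta adj (G.obj Y) ≫ G.map (eps adj Y) = 𝟙 _ :=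
  adj.right_triangle_components Y

end Units

variable [HasExt.{w} C] [HasExt.{w'} D]

section Left

variable {F : C ⥤ D} [F.Additive] [PreservesFiniteLimits F] [PreservesFiniteColimits F]
  {G : D ⥤ C} (adj : F ⊣ G)

/-- The map `Ext¹(X, GY) → Ext¹(FX, Y)`. -/
noncomputable def phi (X : C) (Y : D) : Ext.{w} X (G.obj Y) 1 →+ Ext.{w'} (F.obj X) Y 1 :=
  ((Ext.mk₀ (eps adj Y)).postcomp (F.obj X) (add_zero 1)).comp
    (F.mapExtAddHom X (G.obj Y) 1)

lemma phi_apply (X : C) (Y : D) (e : Ext.{w} X (G.obj Y) 1) :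
    phi.{w', w} adj X Y e =
      (e.mapExactFunctor F).comp (Ext.mk₀ (eps adj Y)) (add_zero 1) := rfl

lemma phi_injective (X : C) (Y : D) : Function.Injective (phi.{w', w} adj X Y) := by
  rw [injective_iff_map_eq_zero]
  intro e he
  obtain ⟨E, i, p, z, h, rfl⟩ := exists_extension e
  obtain ⟨z', h', hF⟩ := cls_map.{w', w} i p z h F
  rw [phi_apply, hF] at he
  obtain ⟨r, hr⟩ := cls_desc _ _ _ _ _ he
  have h1 : i ≫ eta adj E ≫ G.map r = 𝟙 _ := by
    rw [← Category.assoc, ← eta_nat, Category.assoc, ← G.map_comp, hr, right_tri]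
  rw [← Ext.comp_mk₀_id (cls i p z h), ← h1, ← Ext.mk₀_comp_mk₀,
    ← Ext.comp_assoc_of_third_deg_zero, cls_comp, Ext.zero_comp]

lemma phi_natX {X X' : C} (f : X ⟶ X') (Y : D) (e : Ext.{w} X' (G.obj Y) 1) :
    phi.{w', w} adj X Y ((Ext.mk₀ f).comp e (zero_add 1)) =
      (Ext.mk₀ (F.map f)).comp (phi.{w', w} adj X' Y e) (zero_add 1) := by
  rw [phi_apply, phi_apply, Ext.mapExactFunctor_comp, Ext.mapExactFunctor_mk₀,
    Ext.comp_assoc_of_third_deg_zero]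

lemma phi_natY (X : C) {Y Y' : D} (g : Y ⟶ Y') (e : Ext.{w} X (G.obj Y) 1) :
    phi.{w', w} adj X Y' (e.comp (Ext.mk₀ (G.map g)) (add_zero 1)) =
      (phi.{w', w} adj X Y e).comp (Ext.mk₀ g) (add_zero 1) := by
  rw [phi_apply, phi_apply, Ext.mapExactFunctor_comp, Ext.mapExactFunctor_mk₀,
    Ext.comp_assoc_of_third_deg_zero, Ext.comp_assoc_of_third_deg_zero, Ext.mk₀_comp_mk₀,
    Ext.mk₀_comp_mk₀, eps_nat]

lemma phi_surjective (X : C) (Y : D)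
    (hY : ∀ (W Z : D) (i : Y ⟶ W) (p : W ⟶ Z) (z : i ≫ p = 0),
      (ShortComplex.mk i p z).ShortExact →
        ∃ z' : G.map i ≫ G.map p = 0, (ShortComplex.mk (G.map i) (G.map p) z').ShortExact) :
    Function.Surjective (phi.{w', w} adj X Y) := by
  intro e
  obtain ⟨W, i, p, z, h, rfl⟩ := exists_extension e
  obtain ⟨z', hG⟩ := hY _ _ i p z h
  obtain ⟨z'', h'', hF⟩ := cls_map.{w', w} _ _ z' hG F
  refine ⟨(Ext.mk₀ (eta adj X)).comp (cls _ _ z' hG) (zero_add 1), ?_⟩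
  rw [phi_natX, phi_apply, hF, cls_nat _ _ _ _ i p z h (eps adj Y) (eps adj W)
    (eps adj (F.obj X)) (eps_nat adj i).symm (eps_nat adj p).symm, Ext.mk₀_comp_mk₀_assoc,
    left_tri, Ext.mk₀_id_comp]

end Left

section Right

variable {F : C ⥤ D} [F.Additive] [PreservesFiniteLimits F] [PreservesFiniteColimits F]
  {G : D ⥤ C} (adj : G ⊣ F)

/-- The map `Ext¹(GY, X) → Ext¹(Y, FX)`. -/
noncomputable def psi (X : C) (Y : D) : Ext.{w} (G.obj Y) X 1 →+ Ext.{w'} Y (F.obj X) 1 :=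
  ((Ext.mk₀ (eta adj Y)).precomp (F.obj X) (zero_add 1)).comp
    (F.mapExtAddHom (G.obj Y) X 1)

lemma psi_apply (X : C) (Y : D) (e : Ext.{w} (G.obj Y) X 1) :
    psi.{w', w} adj X Y e =
      (Ext.mk₀ (eta adj Y)).comp (e.mapExactFunctor F) (zero_add 1) := rfl

lemma psi_injective (X : C) (Y : D) : Function.Injective (psi.{w', w} adj X Y) := by
  rw [injective_iff_map_eq_zero]
  intro e he
  obtain ⟨E, i, p, z, h, rfl⟩ := exists_extension e
  obtain ⟨z', h', hF⟩ := cls_map.{w', w} i p z h F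
  rw [psi_apply, hF] at he
  obtain ⟨r, hr⟩ := cls_lift _ _ _ _ _ he
  have h1 : (G.map r ≫ eps adj E) ≫ p = 𝟙 _ := by
    rw [Category.assoc, ← eps_nat, ← Category.assoc, ← G.map_comp, hr, left_tri]
  rw [← Ext.mk₀_id_comp (cls i p z h), ← h1, ← Ext.mk₀_comp_mk₀_assoc, comp_cls, Ext.comp_zero]

lemma psi_natX {X X' : C} (f : X ⟶ X') (Y : D) (e : Ext.{w} (G.obj Y) X 1) :
    psi.{w', w} adj X' Y (e.comp (Ext.mk₀ f) (add_zero 1)) =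
      (psi.{w', w} adj X Y e).comp (Ext.mk₀ (F.map f)) (add_zero 1) := by
  rw [psi_apply, psi_apply, Ext.mapExactFunctor_comp, Ext.mapExactFunctor_mk₀,
    Ext.comp_assoc_of_third_deg_zero]

lemma psi_natY (X : C) {Y Y' : D} (g : Y ⟶ Y') (e : Ext.{w} (G.obj Y') X 1) :
    psi.{w', w} adj X Y ((Ext.mk₀ (G.map g)).comp e (zero_add 1)) =
      (Ext.mk₀ g).comp (psi.{w', w} adj X Y' e) (zero_add 1) := by
  rw [psi_apply, psi_apply, Ext.mapExactFunctor_comp, Ext.mapExactFunctor_mk₀,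
    Ext.mk₀_comp_mk₀_assoc, Ext.mk₀_comp_mk₀_assoc, eta_nat]

lemma psi_surjective (X : C) (Y : D)
    (hY : ∀ (W Z : D) (i : Z ⟶ W) (p : W ⟶ Y) (z : i ≫ p = 0),
      (ShortComplex.mk i p z).ShortExact →
        ∃ z' : G.map i ≫ G.map p = 0, (ShortComplex.mk (G.map i) (G.map p) z').ShortExact) :
    Function.Surjective (psi.{w', w} adj X Y) := by
  intro e
  obtain ⟨W, i, p, z, h, rfl⟩ := exists_extension e
  obtain ⟨z', hG⟩ := hY _ _ i p z h
  obtain ⟨z'', h'', hF⟩ := cls_map.{w', w} _ _ z' hG F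
  refine ⟨(cls _ _ z' hG).comp (Ext.mk₀ (eps adj X)) (add_zero 1), ?_⟩
  rw [psi_natX, psi_apply, hF, ← cls_nat i p z h _ _ _ _ (eta adj (F.obj X)) (eta adj W)
    (eta adj Y) (eta_nat adj i) (eta_nat adj p), Ext.comp_assoc_of_third_deg_zero,
    Ext.mk₀_comp_mk₀, right_tri, Ext.comp_mk₀_id]

end Right

end Adj

section Complexes

variable {C : Type*} [Category* C] [Abelian C]

open HomologicalComplex

/-- The bijection `Hom(Sⁿ(X), Y) ≃ Hom(X, Zⁿ(Y))`. -/
noncomputable def cycEquiv (n : ℤ) (X : C) (Y : CochainComplex C ℤ) :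
    ((single C (ComplexShape.up ℤ) n).obj X ⟶ Y) ≃ (X ⟶ Y.cycles n) where
  toFun f := Y.liftCycles ((singleObjXSelf (ComplexShape.up ℤ) n X).inv ≫ f.f n)
    (n + 1) (by simp) (by simp)
  invFun g := mkHomFromSingle (g ≫ Y.iCycles n)
    (fun k _ => by rw [Category.assoc, iCycles_d, comp_zero])
  left_inv f := by
    apply from_single_hom_ext
    rw [mkHomFromSingle_f, liftCycles_i, Iso.hom_inv_id_assoc]
  right_inv g := by
    rw [← cancel_mono (Y.iCycles n), liftCycles_i, mkHomFromSingle_f, Iso.inv_hom_id_assoc]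

lemma cycEquiv_i (n : ℤ) (X : C) (Y : CochainComplex C ℤ)
    (f : (single C (ComplexShape.up ℤ) n).obj X ⟶ Y) :
    cycEquiv n X Y f ≫ Y.iCycles n = (singleObjXSelf (ComplexShape.up ℤ) n X).inv ≫ f.f n :=
  Y.liftCycles_i ((singleObjXSelf (ComplexShape.up ℤ) n X).inv ≫ f.f n)
    (n + 1) (by simp) (by simp)

lemma cycEquiv_symm_f (n : ℤ) (X : C) (Y : CochainComplex C ℤ) (g : X ⟶ Y.cycles n) :
    ((cycEquiv n X Y).symm g).f n =
      (singleObjXSelf (ComplexShape.up ℤ) n X).hom ≫ g ≫ Y.iCycles n :=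
  mkHomFromSingle_f (g ≫ Y.iCycles n)
    (fun k _ => by rw [Category.assoc, iCycles_d, comp_zero])

lemma cycEquiv_natl (n : ℤ) {X X' : C} (Y : CochainComplex C ℤ) (f : X ⟶ X')
    (g : X' ⟶ Y.cycles n) :
    (cycEquiv n X Y).symm (f ≫ g) =
      (single C (ComplexShape.up ℤ) n).map f ≫ (cycEquiv n X' Y).symm g := by
  apply from_single_hom_ext
  rw [cycEquiv_symm_f, comp_f, cycEquiv_symm_f, single_map_f_self, Category.assoc, Category.assoc,
    Category.assoc, Iso.inv_hom_id_assoc]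

lemma cycEquiv_natr (n : ℤ) (X : C) {Y Y' : CochainComplex C ℤ}
    (f : (single C (ComplexShape.up ℤ) n).obj X ⟶ Y) (g : Y ⟶ Y') :
    cycEquiv n X Y' (f ≫ g) = cycEquiv n X Y f ≫ cyclesMap g n := by
  rw [← cancel_mono (Y'.iCycles n), cycEquiv_i, Category.assoc, cyclesMap_i,
    ← Category.assoc, cycEquiv_i, comp_f, Category.assoc]

/-- `Sⁿ ⊣ Zⁿ`. -/
noncomputable def singleAdjCycles (n : ℤ) :
    single C (ComplexShape.up ℤ) n ⊣ cyclesFunctor C (ComplexShape.up ℤ) n :=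
  Adjunction.mkOfHomEquiv
    { homEquiv := fun X Y => cycEquiv n X Y
      homEquiv_naturality_left_symm := fun f g => cycEquiv_natl n _ f g
      homEquiv_naturality_right := fun f g => cycEquiv_natr n _ f g }

/-- The bijection `Hom(Yⁿ/Bⁿ(Y), X) ≃ Hom(Y, Sⁿ(X))`. -/
noncomputable def opcEquiv (n : ℤ) (Y : CochainComplex C ℤ) (X : C) :
    (Y.opcycles n ⟶ X) ≃ (Y ⟶ (single C (ComplexShape.up ℤ) n).obj X) where
  toFun g := mkHomToSingle (Y.pOpcycles n ≫ g)
    (fun i _ => by rw [d_pOpcycles_assoc, zero_comp])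
  invFun f := Y.descOpcycles (f.f n ≫ (singleObjXSelf (ComplexShape.up ℤ) n X).hom)
    (n - 1) (by simp) (by rw [← f.comm_assoc, single_obj_d, zero_comp, comp_zero])
  left_inv g := by
    rw [← cancel_epi (Y.pOpcycles n), p_descOpcycles, mkHomToSingle_f, Category.assoc,
      Category.assoc, Iso.inv_hom_id, Category.comp_id]
  right_inv f := by
    apply to_single_hom_ext
    rw [mkHomToSingle_f, p_descOpcycles, Category.assoc, Iso.hom_inv_id, Category.comp_id]

lemma p_opcEquiv_symm (n : ℤ) (Y : CochainComplex C ℤ) (X : C)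
    (f : Y ⟶ (single C (ComplexShape.up ℤ) n).obj X) :
    Y.pOpcycles n ≫ (opcEquiv n Y X).symm f =
      f.f n ≫ (singleObjXSelf (ComplexShape.up ℤ) n X).hom :=
  Y.p_descOpcycles (f.f n ≫ (singleObjXSelf (ComplexShape.up ℤ) n X).hom)
    (n - 1) (by simp) (by rw [← f.comm_assoc, single_obj_d, zero_comp, comp_zero])

lemma opcEquiv_f (n : ℤ) (Y : CochainComplex C ℤ) (X : C) (g : Y.opcycles n ⟶ X) :
    (opcEquiv n Y X g).f n =
      (Y.pOpcycles n ≫ g) ≫ (singleObjXSelf (ComplexShape.up ℤ) n X).inv :=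
  mkHomToSingle_f (Y.pOpcycles n ≫ g)
    (fun i _ => by rw [d_pOpcycles_assoc, zero_comp])

lemma opcEquiv_natl (n : ℤ) {Y Y' : CochainComplex C ℤ} (X : C) (f : Y ⟶ Y')
    (g : Y' ⟶ (single C (ComplexShape.up ℤ) n).obj X) :
    (opcEquiv n Y X).symm (f ≫ g) = opcyclesMap f n ≫ (opcEquiv n Y' X).symm g := by
  rw [← cancel_epi (Y.pOpcycles n), p_opcEquiv_symm, p_opcyclesMap_assoc, p_opcEquiv_symm, comp_f,
    Category.assoc]

lemma opcEquiv_natr (n : ℤ) (Y : CochainComplex C ℤ) {X X' : C}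
    (f : Y.opcycles n ⟶ X) (g : X ⟶ X') :
    opcEquiv n Y X' (f ≫ g) = opcEquiv n Y X f ≫ (single C (ComplexShape.up ℤ) n).map g := by
  apply to_single_hom_ext
  rw [opcEquiv_f, comp_f, opcEquiv_f, single_map_f_self, Category.assoc, Category.assoc,
    Category.assoc, Category.assoc, Iso.inv_hom_id_assoc]

/-- `Yⁿ/Bⁿ ⊣ Sⁿ`. -/
noncomputable def opcyclesAdjSingle (n : ℤ) :
    opcyclesFunctor C (ComplexShape.up ℤ) n ⊣ single C (ComplexShape.up ℤ) n :=
  Adjunction.mkOfHomEquiv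
    { homEquiv := fun Y X => opcEquiv n Y X
      homEquiv_naturality_left_symm := fun f g => opcEquiv_natl n _ f g
      homEquiv_naturality_right := fun f g => opcEquiv_natr n _ f g }

lemma cycles_shortExact (S : ShortComplex (CochainComplex C ℤ)) (hS : S.ShortExact) (n : ℤ)
    (hex : S.X₁.ExactAt (n + 1)) :
    ∃ z, (ShortComplex.mk (cyclesMap S.f n) (cyclesMap S.g n) z).ShortExact := by
  have := hS.mono_f
  have := hS.epi_g
  have hepi : Epi (cyclesMap S.g n) := by
    rw [epi_iff_surjective_up_to_refinements]
    intro A y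
    have hSn := hS.map_of_exact (eval C (ComplexShape.up ℤ) n)
    have hSn1 := hS.map_of_exact (eval C (ComplexShape.up ℤ) (n + 1))
    have hm : Mono (S.f.f (n + 1)) := hSn1.mono_f
    have hm2 : Mono (S.f.f (n + 1 + 1)) :=
      (hS.map_of_exact (eval C (ComplexShape.up ℤ) (n + 1 + 1))).mono_f
    have he : Epi (S.g.f n) := hSn.epi_g
    obtain ⟨A₁, π₁, hπ₁, x, hx⟩ := surjective_up_to_refinements_of_epi (S.g.f n) (y ≫ S.X₃.iCycles n)
    have h0 : (x ≫ S.X₂.d n (n + 1)) ≫ S.g.f (n + 1) = 0 := by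
      rw [Category.assoc, ← S.g.comm, ← reassoc_of% hx]
      simp
    have := hSn1.mono_f
    obtain ⟨u, hu⟩ : ∃ u : A₁ ⟶ S.X₁.X (n + 1), u ≫ S.f.f (n + 1) = x ≫ S.X₂.d n (n + 1) :=
      ⟨hSn1.exact.lift _ h0, hSn1.exact.lift_f _ h0⟩
    have hud : u ≫ S.X₁.d (n + 1) (n + 1 + 1) = 0 := by
      rw [← cancel_mono (S.f.f (n + 1 + 1)), Category.assoc, ← S.f.comm, reassoc_of% hu]
      simp
    rw [exactAt_iff' _ n (n + 1) (n + 1 + 1) (by simp) (by simp)] at hex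
    obtain ⟨A₂, π₂, hπ₂, v, hv'⟩ : ∃ (A₂ : C) (π₂ : A₂ ⟶ A₁) (_ : Epi π₂)
        (v : A₂ ⟶ S.X₁.X n), π₂ ≫ u = v ≫ S.X₁.d n (n + 1) :=
      hex.exact_up_to_refinements u hud
    refine ⟨A₂, π₂ ≫ π₁, epi_comp _ _,
      S.X₂.liftCycles (π₂ ≫ x - v ≫ S.f.f n) (n + 1) (by simp) ?_, ?_⟩
    · rw [Preadditive.sub_comp, Category.assoc, Category.assoc, S.f.comm, ← reassoc_of% hv', hu,
        sub_self]
    · have hz : S.f.f n ≫ S.g.f n = 0 := by rw [← comp_f, S.zero]; rfl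
      rw [← cancel_mono (S.X₃.iCycles n)]
      simp [hx, hz]
  have hmono : Mono (cyclesMap S.f n) := inferInstance
  exact ⟨by rw [← cyclesMap_comp, S.zero, cyclesMap_zero],
    { exact := cycles_left_exact S hS.exact n
      mono_f := hmono
      epi_g := hepi }⟩

lemma opcycles_shortExact (S : ShortComplex (CochainComplex C ℤ)) (hS : S.ShortExact) (n : ℤ)
    (hex : S.X₃.ExactAt (n - 1)) :
    ∃ z, (ShortComplex.mk (opcyclesMap S.f n) (opcyclesMap S.g n) z).ShortExact := by
  have := hS.mono_f
  have := hS.epi_g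
  have hmono : Mono (opcyclesMap S.f n) := by
    refine Preadditive.mono_of_cancel_zero _ (fun {A} a ha => ?_)
    have hSn1 := hS.map_of_exact (eval C (ComplexShape.up ℤ) (n - 1))
    have hm : Mono (S.f.f n) := (hS.map_of_exact (eval C (ComplexShape.up ℤ) n)).mono_f
    have hm2 : Mono (S.f.f (n - 1)) := hSn1.mono_f
    have he : Epi (S.g.f (n - 1 - 1)) :=
      (hS.map_of_exact (eval C (ComplexShape.up ℤ) (n - 1 - 1))).epi_g
    obtain ⟨A₁, π₁, hπ₁, x, hx⟩ := surjective_up_to_refinements_of_epi (S.X₁.pOpcycles n) a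
    have h0 : (x ≫ S.f.f n) ≫ S.X₂.pOpcycles n = 0 := by
      rw [Category.assoc, ← p_opcyclesMap, ← reassoc_of% hx, ha, comp_zero]
    obtain ⟨A₂, π₂, hπ₂, w, hw⟩ :=
      ((CokernelCofork.IsColimit.comp_π_eq_zero_iff_up_to_refinements
        (S.X₂.opcyclesIsCokernel (n - 1) n (by simp))) (x ≫ S.f.f n)).1 h0
    have hwg : (w ≫ S.g.f (n - 1)) ≫ S.X₃.d (n - 1) n = 0 := by
      have hz : S.f.f n ≫ S.g.f n = 0 := by rw [← comp_f, S.zero]; rfl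
      rw [Category.assoc, S.g.comm, ← reassoc_of% hw, hz]
      simp
    rw [exactAt_iff' _ (n - 1 - 1) (n - 1) n (by simp) (by simp)] at hex
    obtain ⟨A₃, π₃, hπ₃, y, hy'⟩ : ∃ (A₃ : C) (π₃ : A₃ ⟶ A₂) (_ : Epi π₃)
        (y : A₃ ⟶ S.X₃.X (n - 1 - 1)),
        π₃ ≫ w ≫ S.g.f (n - 1) = y ≫ S.X₃.d (n - 1 - 1) (n - 1) :=
      hex.exact_up_to_refinements (w ≫ S.g.f (n - 1)) hwg
    obtain ⟨A₄, π₄, hπ₄, t, ht⟩ := surjective_up_to_refinements_of_epi (S.g.f (n - 1 - 1)) y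
    have hk : (π₄ ≫ π₃ ≫ w - t ≫ S.X₂.d (n - 1 - 1) (n - 1)) ≫ S.g.f (n - 1) = 0 := by
      rw [Preadditive.sub_comp, Category.assoc, Category.assoc, Category.assoc, hy',
        ← S.g.comm, reassoc_of% ht, sub_self]
    have := hSn1.mono_f
    obtain ⟨u, hu⟩ : ∃ u : A₄ ⟶ S.X₁.X (n - 1),
        u ≫ S.f.f (n - 1) = π₄ ≫ π₃ ≫ w - t ≫ S.X₂.d (n - 1 - 1) (n - 1) :=
      ⟨hSn1.exact.lift _ hk, hSn1.exact.lift_f _ hk⟩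
    have hud : u ≫ S.X₁.d (n - 1) n = π₄ ≫ π₃ ≫ π₂ ≫ x := by
      rw [← cancel_mono (S.f.f n), Category.assoc, ← S.f.comm, reassoc_of% hu]
      simp [hw]
    have : π₄ ≫ π₃ ≫ π₂ ≫ π₁ ≫ a = 0 := by
      rw [hx]
      have := congrArg (fun k => k ≫ S.X₁.pOpcycles n) hud
      simpa using this.symm
    have e1 := zero_of_epi_comp _ this
    have e2 := zero_of_epi_comp _ e1
    have e3 := zero_of_epi_comp _ e2
    exact zero_of_epi_comp _ e3
  have hepi : Epi (opcyclesMap S.g n) := inferInstance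
  exact ⟨by rw [← opcyclesMap_comp, S.zero, opcyclesMap_zero],
    { exact := opcycles_right_exact S hS.exact n
      mono_f := hmono
      epi_g := hepi }⟩

end Complexes

end Stmt12

/-- Let `𝒜` be an abelian category.  For `X : 𝒜`, `n : ℤ` and a cochain complex `Y`
there are injective homomorphisms of abelian groups
`Ext¹(X, Zⁿ(Y)) → Ext¹(Sⁿ(X), Y)` and `Ext¹(Yⁿ/Bⁿ(Y), X) → Ext¹(Y, Sⁿ(X))`,
natural in `X` and `Y`; if `Y` is acyclic, both are isomorphisms. -/
theorem stmt_12 [HasExt.{w} 𝒜] [HasExt.{w'} (CochainComplex 𝒜 ℤ)] :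
    ∃ (Φ : ∀ (X : 𝒜) (n : ℤ) (Y : CochainComplex 𝒜 ℤ),
        Abelian.Ext X (Y.cycles n) 1 →+ Abelian.Ext (sph n X) Y 1)
      (Ψ : ∀ (X : 𝒜) (n : ℤ) (Y : CochainComplex 𝒜 ℤ),
        Abelian.Ext (Y.opcycles n) X 1 →+ Abelian.Ext Y (sph n X) 1),
      (∀ X n Y, Function.Injective (Φ X n Y)) ∧
      (∀ X n Y, Function.Injective (Ψ X n Y)) ∧
      -- naturality of `Φ` in the variable `X` (contravariant)
      (∀ (X X' : 𝒜) (f : X ⟶ X') (n : ℤ) (Y : CochainComplex 𝒜 ℤ)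
        (e : Abelian.Ext X' (Y.cycles n) 1),
        Φ X n Y ((Abelian.Ext.mk₀ f).comp e (zero_add 1)) =
          (Abelian.Ext.mk₀ (sphMap n f)).comp (Φ X' n Y e) (zero_add 1)) ∧
      -- naturality of `Φ` in the variable `Y` (covariant)
      (∀ (X : 𝒜) (n : ℤ) (Y Y' : CochainComplex 𝒜 ℤ) (g : Y ⟶ Y')
        (e : Abelian.Ext X (Y.cycles n) 1),
        Φ X n Y' (e.comp (Abelian.Ext.mk₀ (HomologicalComplex.cyclesMap g n))
            (add_zero 1)) =
          (Φ X n Y e).comp (Abelian.Ext.mk₀ g) (add_zero 1)) ∧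
      -- naturality of `Ψ` in the variable `X` (covariant)
      (∀ (X X' : 𝒜) (f : X ⟶ X') (n : ℤ) (Y : CochainComplex 𝒜 ℤ)
        (e : Abelian.Ext (Y.opcycles n) X 1),
        Ψ X' n Y (e.comp (Abelian.Ext.mk₀ f) (add_zero 1)) =
          (Ψ X n Y e).comp (Abelian.Ext.mk₀ (sphMap n f)) (add_zero 1)) ∧
      -- naturality of `Ψ` in the variable `Y` (contravariant)
      (∀ (X : 𝒜) (n : ℤ) (Y Y' : CochainComplex 𝒜 ℤ) (g : Y ⟶ Y')
        (e : Abelian.Ext (Y'.opcycles n) X 1),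
        Ψ X n Y ((Abelian.Ext.mk₀ (HomologicalComplex.opcyclesMap g n)).comp e
            (zero_add 1)) =
          (Abelian.Ext.mk₀ g).comp (Ψ X n Y' e) (zero_add 1)) ∧
      -- for acyclic `Y`, both maps are isomorphisms
      (∀ (X : 𝒜) (n : ℤ) (Y : CochainComplex 𝒜 ℤ), (∀ m : ℤ, Y.ExactAt m) →
        Function.Bijective (Φ X n Y) ∧ Function.Bijective (Ψ X n Y)) := by
  refine ⟨fun X n Y => Stmt12.phi.{w', w} (Stmt12.singleAdjCycles n) X Y,
    fun X n Y => Stmt12.psi.{w', w} (Stmt12.opcyclesAdjSingle n) X Y,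
    fun X n Y => Stmt12.phi_injective (Stmt12.singleAdjCycles n) X Y,
    fun X n Y => Stmt12.psi_injective (Stmt12.opcyclesAdjSingle n) X Y,
    fun X X' f n Y e => Stmt12.phi_natX (Stmt12.singleAdjCycles n) f Y e,
    fun X n Y Y' g e => Stmt12.phi_natY (Stmt12.singleAdjCycles n) X g e,
    fun X X' f n Y e => Stmt12.psi_natX (Stmt12.opcyclesAdjSingle n) f Y e,
    fun X n Y Y' g e => Stmt12.psi_natY (Stmt12.opcyclesAdjSingle n) X g e, ?_⟩
  intro X n Y hY
  exact ⟨⟨Stmt12.phi_injective (Stmt12.singleAdjCycles n) X Y,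
      Stmt12.phi_surjective (Stmt12.singleAdjCycles n) X Y
        (fun W Z i p z h =>
          Stmt12.cycles_shortExact (ShortComplex.mk i p z) h n (hY _))⟩,
    ⟨Stmt12.psi_injective (Stmt12.opcyclesAdjSingle n) X Y,
      Stmt12.psi_surjective (Stmt12.opcyclesAdjSingle n) X Y
        (fun W Z i p z h =>
          Stmt12.opcycles_shortExact (ShortComplex.mk i p z) h n (hY _))⟩⟩
end

section
/- (Neeman.) Let R be a ring and X a cochain complex of flat right R-modules. Then there exists a degreewise short exact sequence of cochain complexes 0 → W → P → X → 0 such that every component Pⁿ is a projective R-module and W is an acyclic complex of flat R-modules all of whose cycle modules Zⁿ(W) = ker(Wⁿ → W^{n+1}) are flat. -/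
open CategoryTheory CategoryTheory.Limits

universe u

/-- Flatness of a left module over an arbitrary (possibly noncommutative) ring,
expressed via the standard equational criterion, which is equivalent to the exactness
of the tensor product functor with `M`: whenever `∑ xⱼ • mⱼ = 0` with `xⱼ ∈ R`,
`mⱼ ∈ M`, there are `yᵢ ∈ M` and `aⱼᵢ ∈ R` with `mⱼ = ∑ᵢ aⱼᵢ • yᵢ` for all `j` and
`∑ⱼ xⱼ * aⱼᵢ = 0` for all `i`. -/
def IsFlat (R : Type u) [Ring R] (M : Type u) [AddCommGroup M] [Module R M] : Prop :=
  ∀ (k : ℕ) (x : Fin k → R) (m : Fin k → M), (∑ j, x j • m j) = 0 →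
    ∃ (l : ℕ) (a : Fin k → Fin l → R) (y : Fin l → M),
      (∀ j, m j = ∑ i, a j i • y i) ∧ ∀ i, (∑ j, x j * a j i) = 0

namespace Neeman

section algebra
variable {R : Type u} [Ring R]

/-- reassociating a double sum -/
lemma sum_smul_sum {M : Type u} [AddCommGroup M] [Module R M] {k l : ℕ} (x : Fin k → R)
    (a : Fin k → Fin l → R) (y : Fin l → M) :
    ∑ j, x j • ∑ i, a j i • y i = ∑ i, (∑ j, x j * a j i) • y i := by
  simp_rw [Finset.smul_sum, Finset.sum_smul, smul_smul]
  exact Finset.sum_comm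

/-- The equational criterion for finitely many relations. -/
lemma flat_multi {M : Type u} [AddCommGroup M] [Module R M] (hM : IsFlat R M) :
    ∀ (k l : ℕ) (a : Fin k → Fin l → R) (m : Fin l → M), (∀ j, ∑ i, a j i • m i = 0) →
    ∃ (l' : ℕ) (b : Fin l → Fin l' → R) (y : Fin l' → M),
      (∀ i, m i = ∑ t, b i t • y t) ∧ ∀ j t, (∑ i, a j i * b i t) = 0 := by
  intro k
  induction k with
  | zero =>
    intro l a m _
    refine ⟨l, fun i t => if i = t then 1 else 0, m, ?_, fun j => j.elim0⟩
    intro i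
    simp
  | succ k ih =>
    intro l a m h
    obtain ⟨l₁, b₁, y₁, h₁, h₁'⟩ := ih l (fun j => a j.castSucc) m (fun j => h _)
    obtain ⟨l₂, b₂, y₂, h₂, h₂'⟩ := hM l₁ (fun t => ∑ i, a (Fin.last k) i * b₁ i t) y₁ (by
      rw [← sum_smul_sum, ← h (Fin.last k)]
      simp_rw [← h₁])
    refine ⟨l₂, fun i t => ∑ s, b₁ i s * b₂ s t, y₂, ?_, ?_⟩
    · intro i
      rw [h₁ i]
      simp_rw [h₂]
      exact sum_smul_sum _ _ _
    · intro j t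
      have e : ∑ i, a j i * ∑ s, b₁ i s * b₂ s t = ∑ s, (∑ i, a j i * b₁ i s) * b₂ s t := by
        simp_rw [Finset.mul_sum, Finset.sum_mul, mul_assoc]
        exact Finset.sum_comm
      rw [e]
      refine Fin.lastCases ?_ (fun j => ?_) j
      · exact h₂' t
      · simp [h₁']

lemma flat_free (ι : Type u) : IsFlat R (ι →₀ R) := by
  classical
  intro k x m h
  let S : Finset ι := Finset.univ.biUnion (fun j => (m j).support)
  let e := S.equivFin
  refine ⟨S.card, fun j i => m j (e.symm i), fun i => Finsupp.single (e.symm i : ι) 1, ?_, ?_⟩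
  · intro j
    have h1 : m j = ∑ s ∈ S, Finsupp.single s (m j s) := by
      rw [← Finsupp.sum_of_support_subset (m j) (s := S) _ (fun s r => Finsupp.single s r)
        (by simp)]
      · exact (Finsupp.sum_single _).symm
      · exact Finset.subset_biUnion_of_mem (fun j => (m j).support) (Finset.mem_univ j)
    conv_lhs => rw [h1]
    rw [← Finset.sum_coe_sort S, ← Equiv.sum_comp e.symm]
    simp
  · intro i
    have := congrArg (fun f => f (e.symm i : ι)) h
    simpa [Finsupp.finsetSum_apply] using this

lemma flat_projective (P : Type u) [AddCommGroup P] [Module R P] [Module.Projective R P] :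
    IsFlat R P := by
  obtain ⟨s, hs⟩ := Module.projective_def.1 ‹Module.Projective R P›
  intro k x m h
  obtain ⟨l, a, y, h1, h2⟩ := flat_free (R := R) P k x (fun j => s (m j)) (by
    have := congrArg s h
    simpa using this)
  refine ⟨l, a, fun i => Finsupp.linearCombination R id (y i), ?_, h2⟩
  intro j
  have := congrArg (Finsupp.linearCombination R id) (h1 j)
  rw [hs] at this
  simpa using this

lemma flat_ker {P X : Type u} [AddCommGroup P] [Module R P] [Module.Projective R P]
    [AddCommGroup X] [Module R X] (hX : IsFlat R X) (g : P →ₗ[R] X)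
    (hg : Function.Surjective g) : IsFlat R (LinearMap.ker g) := by
  intro k x m h
  obtain ⟨l, a, y, h1, h2⟩ := flat_projective (R := R) P k x (fun j => m j) (by
    have := congrArg Subtype.val h
    simpa using this)
  obtain ⟨l', b, v, h3, h4⟩ := flat_multi hX k l a (fun i => g (y i)) (by
    intro j
    have := congrArg g (h1 j)
    simp only [LinearMap.map_coe_ker, map_sum, map_smul] at this
    exact this.symm)
  choose v' hv' using fun t => hg (v t)
  refine ⟨l, a, fun i => ⟨y i - ∑ t, b i t • v' t, ?_⟩, ?_, h2⟩
  · simp [h3, hv']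
  · intro j
    ext
    simp only [Submodule.coe_sum, Submodule.coe_smul, smul_sub, Finset.sum_sub_distrib]
    rw [sum_smul_sum]
    simp [h4, h1]

end algebra

section stages
variable {R : Type u} [Ring R]

lemma dd_apply (P : CochainComplex (ModuleCat.{u} R) ℤ) (i j k : ℤ) (p : P.X i) :
    (P.d j k).hom ((P.d i j).hom p) = 0 := by
  exact congrArg (fun f => f.hom p) (P.d_comp_d i j k)

lemma comm_apply {P Q : CochainComplex (ModuleCat.{u} R) ℤ} (g : P ⟶ Q) (i j : ℤ) (p : P.X i) :
    (g.f j).hom ((P.d i j).hom p) = (Q.d i j).hom ((g.f i).hom p) := by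
  exact (congrArg (fun f => f.hom p) (g.comm i j)).symm

/-- A degreewise projective complex with a degreewise surjection onto `X`. -/
structure Stage (X : CochainComplex (ModuleCat.{u} R) ℤ) where
  P : CochainComplex (ModuleCat.{u} R) ℤ
  g : P ⟶ X
  proj : ∀ n, Module.Projective R (P.X n)
  surj : ∀ n, Function.Surjective (g.f n).hom

variable {X : CochainComplex (ModuleCat.{u} R) ℤ}

/-- Finite families in the kernel of `g`, with relations between their differentials. -/
structure State (S : Stage X) (m : ℤ) where
  k : ℕ
  l : ℕ
  a : Fin k → Fin l → R
  y : Fin l → S.P.X m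
  hy : ∀ i, (S.g.f m).hom (y i) = 0
  rel : ∀ j, ∑ i, a j i • (S.P.d m (m + 1)).hom (y i) = 0

lemma State.exists_next (hX : ∀ n : ℤ, IsFlat R ↥(X.X n)) {S : Stage X} {m : ℤ} (s : State S m) :
    ∃ (l' : ℕ) (b : Fin s.l → Fin l' → R) (y' : Fin l' → S.P.X (m + 1)),
      (∀ t, (S.g.f (m + 1)).hom (y' t) = 0) ∧
      (∀ i, (S.P.d m (m + 1)).hom (s.y i) = ∑ t, b i t • y' t) ∧
      ∀ j t, ∑ i, s.a j i * b i t = 0 := by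
  have := S.proj (m + 1)
  obtain ⟨l', b, y', h1, h2⟩ := flat_multi (flat_ker (hX (m + 1)) (S.g.f (m + 1)).hom
    (S.surj (m + 1))) s.k s.l s.a (fun i => ⟨(S.P.d m (m + 1)).hom (s.y i), by
      rw [LinearMap.mem_ker, comm_apply, s.hy, map_zero]⟩) (by
      intro j
      ext
      simpa using s.rel j)
  refine ⟨l', b, fun t => y' t, fun t => (y' t).2, fun i => ?_, h2⟩
  have := congrArg Subtype.val (h1 i)
  simpa using this

/-- The next state. -/
noncomputable def State.next (hX : ∀ n : ℤ, IsFlat R ↥(X.X n)) {S : Stage X} {m : ℤ}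
    (s : State S m) : State S (m + 1) where
  k := s.l
  l := (s.exists_next hX).choose
  a := (s.exists_next hX).choose_spec.choose
  y := (s.exists_next hX).choose_spec.choose_spec.choose
  hy := (s.exists_next hX).choose_spec.choose_spec.choose_spec.1
  rel := by
    intro j
    have h := (s.exists_next hX).choose_spec.choose_spec.choose_spec.2.1 j
    have h' := congrArg (S.P.d (m + 1) (m + 1 + 1)).hom h
    rw [dd_apply] at h'
    simpa using h'.symm

lemma State.next_eq (hX : ∀ n : ℤ, IsFlat R ↥(X.X n)) {S : Stage X} {m : ℤ}
    (s : State S m) (i : Fin s.l) :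
    (S.P.d m (m + 1)).hom (s.y i) = ∑ t, (s.next hX).a i t • (s.next hX).y t :=
  (s.exists_next hX).choose_spec.choose_spec.choose_spec.2.1 i

lemma State.next_rel (hX : ∀ n : ℤ, IsFlat R ↥(X.X n)) {S : Stage X} {m : ℤ}
    (s : State S m) (j : Fin s.k) (t : Fin (s.next hX).l) :
    ∑ i : Fin s.l, s.a j i * (s.next hX).a i t = 0 :=
  (s.exists_next hX).choose_spec.choose_spec.choose_spec.2.2 j t

/-- The generators. -/
abbrev Gen (S : Stage X) (m : ℤ) : Type u := Σ s : State S m, Fin s.l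

/-- The tautological map to the kernel. -/
noncomputable def genMap (S : Stage X) (m : ℤ) : (Gen S m →₀ R) →ₗ[R] S.P.X m :=
  Finsupp.linearCombination R (fun q => q.1.y q.2)

/-- The differential on generators. -/
noncomputable def genD (hX : ∀ n : ℤ, IsFlat R ↥(X.X n)) (S : Stage X) (m : ℤ) :
    (Gen S m →₀ R) →ₗ[R] (Gen S (m + 1) →₀ R) :=
  Finsupp.linearCombination R (fun q =>
    ∑ t : Fin (q.1.next hX).l, (q.1.next hX).a q.2 t •
      Finsupp.single (⟨q.1.next hX, t⟩ : Gen S (m + 1)) (1 : R))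

lemma genD_single (hX : ∀ n : ℤ, IsFlat R ↥(X.X n)) (S : Stage X) (m : ℤ) (s : State S m)
    (i : Fin s.l) : genD hX S m (Finsupp.single ⟨s, i⟩ 1) =
      ∑ t, (s.next hX).a i t • Finsupp.single (⟨s.next hX, t⟩ : Gen S (m + 1)) (1 : R) := by
  simp [genD]

lemma genMap_single (S : Stage X) (m : ℤ) (s : State S m)
    (i : Fin s.l) : genMap S m (Finsupp.single ⟨s, i⟩ 1) = s.y i := by
  simp [genMap]

lemma genD_genD (hX : ∀ n : ℤ, IsFlat R ↥(X.X n)) (S : Stage X) (m : ℤ) :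
    genD hX S (m + 1) ∘ₗ genD hX S m = 0 := by
  ext ⟨s, i⟩ : 2
  simp only [LinearMap.comp_apply, Finsupp.lsingle_apply, LinearMap.zero_apply]
  rw [genD_single]
  simp only [map_sum, map_smul, genD_single]
  have := sum_smul_sum (fun t => (s.next hX).a i t) (fun t t' => ((s.next hX).next hX).a t t')
    (fun t' => Finsupp.single (⟨(s.next hX).next hX, t'⟩ : Gen S (m + 1 + 1)) (1 : R))
  refine this.trans ?_
  refine Finset.sum_eq_zero fun t' _ => ?_
  have h := (s.next hX).next_rel hX i t'
  rw [h, zero_smul]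

lemma d_genMap (hX : ∀ n : ℤ, IsFlat R ↥(X.X n)) (S : Stage X) (m : ℤ) :
    (S.P.d m (m + 1)).hom ∘ₗ genMap S m = genMap S (m + 1) ∘ₗ genD hX S m := by
  ext ⟨s, i⟩ : 2
  simp only [LinearMap.comp_apply, Finsupp.lsingle_apply]
  rw [genD_single, genMap_single, s.next_eq hX]
  simp only [map_sum, map_smul, genMap_single]

lemma g_genMap (S : Stage X) (m : ℤ) : (S.g.f m).hom ∘ₗ genMap S m = 0 := by
  ext ⟨s, i⟩
  simp only [LinearMap.comp_apply, Finsupp.lsingle_apply, LinearMap.zero_apply]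
  rw [genMap_single, s.hy]

/-- The differential of the next stage. -/
noncomputable def stepD (hX : ∀ n : ℤ, IsFlat R ↥(X.X n)) (S : Stage X) (n : ℤ) :
    (S.P.X n × (Gen S (n + 1) →₀ R)) →ₗ[R] (S.P.X (n + 1) × (Gen S (n + 1 + 1) →₀ R)) :=
  LinearMap.prod ((S.P.d n (n + 1)).hom.coprod (genMap S (n + 1)))
    (-(genD hX S (n + 1) ∘ₗ LinearMap.snd R _ _))

lemma stepD_stepD (hX : ∀ n : ℤ, IsFlat R ↥(X.X n)) (S : Stage X) (n : ℤ) :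
    stepD hX S (n + 1) ∘ₗ stepD hX S n = 0 := by
  refine LinearMap.ext fun ⟨p, h⟩ => ?_
  have h1 := LinearMap.congr_fun (d_genMap hX S (n + 1)) h
  have h2 := LinearMap.congr_fun (genD_genD hX S (n + 1)) h
  simp only [LinearMap.comp_apply, LinearMap.zero_apply] at h1 h2
  simp [stepD, dd_apply, h1, h2]

/-- The complex of the next stage. -/
noncomputable def stepP (hX : ∀ n : ℤ, IsFlat R ↥(X.X n)) (S : Stage X) :
    CochainComplex (ModuleCat.{u} R) ℤ :=
  CochainComplex.of (fun n => ModuleCat.of R (S.P.X n × (Gen S (n + 1) →₀ R)))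
    (fun n => ModuleCat.ofHom (stepD hX S n))
    (fun n => by rw [← ModuleCat.ofHom_comp, stepD_stepD]; rfl)

lemma stepP_d (hX : ∀ n : ℤ, IsFlat R ↥(X.X n)) (S : Stage X) (n : ℤ) :
    (stepP hX S).d n (n + 1) = ModuleCat.ofHom (stepD hX S n) :=
  CochainComplex.of_d (fun _ => ModuleCat.of R _) (fun n => ModuleCat.ofHom (stepD hX S n)) n

/-- The inclusion. -/
noncomputable def stepι (hX : ∀ n : ℤ, IsFlat R ↥(X.X n)) (S : Stage X) : S.P ⟶ stepP hX S where
  f n := ModuleCat.ofHom (LinearMap.inl R (S.P.X n) (Gen S (n + 1) →₀ R))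
  comm' := by
    rintro n _ rfl
    rw [stepP_d]
    refine ModuleCat.hom_ext (LinearMap.ext fun p => ?_)
    change stepD hX S n (p, 0) = ((S.P.d n (n + 1)).hom p, 0)
    simp [stepD]

/-- The augmentation. -/
noncomputable def stepg (hX : ∀ n : ℤ, IsFlat R ↥(X.X n)) (S : Stage X) : stepP hX S ⟶ X where
  f n := ModuleCat.ofHom ((S.g.f n).hom ∘ₗ LinearMap.fst R (S.P.X n) (Gen S (n + 1) →₀ R))
  comm' := by
    rintro n _ rfl
    rw [stepP_d]
    refine ModuleCat.hom_ext (LinearMap.ext fun ⟨p, h⟩ => ?_)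
    have h1 := LinearMap.congr_fun (g_genMap S (n + 1)) h
    simp only [LinearMap.comp_apply, LinearMap.zero_apply] at h1
    change (X.d n (n + 1)).hom ((S.g.f n).hom p) =
      (S.g.f (n + 1)).hom (stepD hX S n (p, h)).1
    simp [stepD, h1, comm_apply]

/-- The next stage. -/
noncomputable def step (hX : ∀ n : ℤ, IsFlat R ↥(X.X n)) (S : Stage X) : Stage X where
  P := stepP hX S
  g := stepg hX S
  proj n := by
    have := S.proj n
    exact inferInstanceAs (Module.Projective R (S.P.X n × (Gen S (n + 1) →₀ R)))
  surj n x := by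
    obtain ⟨p, hp⟩ := S.surj n x
    exact ⟨((p, 0) : S.P.X n × (Gen S (n + 1) →₀ R)), hp⟩

lemma stepι_stepg (hX : ∀ n : ℤ, IsFlat R ↥(X.X n)) (S : Stage X) :
    stepι hX S ≫ (step hX S).g = S.g := by
  ext n p
  rfl

lemma step_lift (hX : ∀ n : ℤ, IsFlat R ↥(X.X n)) (S : Stage X) (n : ℤ) {A B : ModuleCat.{u} R}
    (e : A ⟶ B) (he : Function.Surjective e.hom) (b : (step hX S).P.X n ⟶ B)
    (h : S.P.X n ⟶ A) (hh : h ≫ e = (stepι hX S).f n ≫ b) :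
    ∃ h' : (step hX S).P.X n ⟶ A, h' ≫ e = b ∧ (stepι hX S).f n ≫ h' = h := by
  let b' : (S.P.X n × (Gen S (n + 1) →₀ R)) →ₗ[R] B := b.hom
  obtain ⟨c, hc⟩ := Module.projective_lifting_property e.hom
    (b' ∘ₗ LinearMap.inr R (S.P.X n) (Gen S (n + 1) →₀ R)) he
  refine ⟨ModuleCat.ofHom (LinearMap.coprod h.hom c : (S.P.X n × (Gen S (n + 1) →₀ R)) →ₗ[R] A),
    ?_, ?_⟩
  · refine ModuleCat.hom_ext (LinearMap.ext fun (q : S.P.X n × (Gen S (n + 1) →₀ R)) => ?_)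
    obtain ⟨p, t⟩ := q
    have h1 := LinearMap.congr_fun hc t
    have h2 : e.hom (h.hom p) = b' (p, 0) := congrArg (fun f => f.hom p) hh
    change e.hom (h.hom p + c t) = b' (p, t)
    rw [map_add, h2]
    have h3 : e.hom (c t) = b' (0, t) := h1
    rw [h3, ← map_add]
    simp
  · refine ModuleCat.hom_ext (LinearMap.ext fun p => ?_)
    change h.hom p + c 0 = h.hom p
    simp

lemma step_solve (hX : ∀ n : ℤ, IsFlat R ↥(X.X n)) (S : Stage X) (n : ℤ) (k : ℕ) (x : Fin k → R)
    (z : Fin k → S.P.X (n + 1)) (hg : ∀ j, (S.g.f (n + 1)).hom (z j) = 0)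
    (hd : ∀ j, (S.P.d (n + 1) (n + 1 + 1)).hom (z j) = 0) (hx : ∑ j, x j • z j = 0) :
    ∃ (l : ℕ) (a : Fin k → Fin l → R) (w : Fin l → (step hX S).P.X n),
      (∀ i, ((step hX S).g.f n).hom (w i) = 0) ∧
      (∀ j, ((stepι hX S).f (n + 1)).hom (z j) =
        ∑ i, a j i • ((step hX S).P.d n (n + 1)).hom (w i)) ∧
      ∀ i, ∑ j, x j * a j i = 0 := by
  have := S.proj (n + 1)
  obtain ⟨l, a, y, h1, h2⟩ := flat_ker (hX (n + 1)) (S.g.f (n + 1)).hom (S.surj (n + 1)) k x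
    (fun j => ⟨z j, hg j⟩) (by ext; simpa using hx)
  have h1' : ∀ j, z j = ∑ i, a j i • (y i : S.P.X (n + 1)) := fun j => by
    simpa using congrArg Subtype.val (h1 j)
  let s : State S (n + 1) :=
    { k := k, l := l, a := a, y := fun i => y i, hy := fun i => (y i).2
      rel := fun j => by
        rw [← hd j, h1' j]
        simp }
  refine ⟨l, a, fun i => ((0, Finsupp.single ⟨s, i⟩ 1) : S.P.X n × (Gen S (n + 1) →₀ R)),
    ?_, ?_, h2⟩
  · intro i
    change (S.g.f n).hom 0 = 0
    simp
  · intro j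
    change ((z j, 0) : S.P.X (n + 1) × (Gen S (n + 1 + 1) →₀ R)) = ∑ i, a j i •
      ((stepP hX S).d n (n + 1)).hom
        ((0, Finsupp.single ⟨s, i⟩ 1) : S.P.X n × (Gen S (n + 1) →₀ R))
    rw [stepP_d]
    change ((z j, 0) : S.P.X (n + 1) × (Gen S (n + 1 + 1) →₀ R)) = ∑ i, a j i •
      stepD hX S n ((0, Finsupp.single ⟨s, i⟩ 1) : S.P.X n × (Gen S (n + 1) →₀ R))
    have e : ∀ i, stepD hX S n (0, Finsupp.single ⟨s, i⟩ 1) =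
        (s.y i, -∑ t, (s.next hX).a i t •
          Finsupp.single (⟨s.next hX, t⟩ : Gen S (n + 1 + 1)) (1 : R)) := by
      intro i
      rw [← genD_single, ← genMap_single]
      simp [stepD]
    simp_rw [e]
    refine Prod.ext ?_ ?_
    · rw [Prod.fst_sum]
      exact h1' j
    · rw [Prod.snd_sum]
      simp only [Prod.smul_snd, smul_neg, Finset.sum_neg_distrib]
      have h3 := sum_smul_sum (fun i => a j i) (fun i t => (s.next hX).a i t)
        (fun t => Finsupp.single (⟨s.next hX, t⟩ : Gen S (n + 1 + 1)) (1 : R))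
      refine (neg_eq_zero.2 (h3.trans ?_)).symm
      refine Finset.sum_eq_zero fun t _ => ?_
      have h := s.next_rel hX j t
      rw [h, zero_smul]

/-- The differential of the initial stage. -/
noncomputable def initD (X : CochainComplex (ModuleCat.{u} R) ℤ) (n : ℤ) :
    ((X.X n →₀ R) × ((Σ m : ℤ, X.X m) →₀ R)) →ₗ[R]
      ((X.X (n + 1) →₀ R) × ((Σ m : ℤ, X.X m) →₀ R)) :=
  LinearMap.inr R _ _ ∘ₗ Finsupp.lmapDomain R R (fun x => (⟨n, x⟩ : Σ m : ℤ, X.X m)) ∘ₗ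
    LinearMap.fst R _ _

/-- The complex of the initial stage. -/
noncomputable def initP (X : CochainComplex (ModuleCat.{u} R) ℤ) :
    CochainComplex (ModuleCat.{u} R) ℤ :=
  CochainComplex.of (fun n => ModuleCat.of R ((X.X n →₀ R) × ((Σ m : ℤ, X.X m) →₀ R)))
    (fun n => ModuleCat.ofHom (initD X n))
    (fun n => by
      rw [← ModuleCat.ofHom_comp]
      refine ModuleCat.hom_ext (LinearMap.ext fun p => ?_)
      simp [initD])

lemma initP_d (X : CochainComplex (ModuleCat.{u} R) ℤ) (n : ℤ) :
    (initP X).d n (n + 1) = ModuleCat.ofHom (initD X n) :=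
  CochainComplex.of_d (fun _ => ModuleCat.of R _) (fun n => ModuleCat.ofHom (initD X n)) n

/-- The augmentation of the initial stage. -/
noncomputable def initAug (X : CochainComplex (ModuleCat.{u} R) ℤ) (n : ℤ) :
    ((X.X n →₀ R) × ((Σ m : ℤ, X.X m) →₀ R)) →ₗ[R] X.X n :=
  LinearMap.coprod (Finsupp.linearCombination R id)
    (Finsupp.linearCombination R (fun q => (X.d q.1 n).hom q.2))

/-- The augmentation of the initial stage. -/
noncomputable def initg (X : CochainComplex (ModuleCat.{u} R) ℤ) : initP X ⟶ X where
  f n := ModuleCat.ofHom (initAug X n)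
  comm' := by
    rintro n _ rfl
    rw [initP_d]
    refine ModuleCat.hom_ext ?_
    change (X.d n (n + 1)).hom ∘ₗ initAug X n = initAug X (n + 1) ∘ₗ initD X n
    refine LinearMap.prod_ext ?_ ?_
    · ext x
      simp [initAug, initD]
    · ext ⟨m, x⟩
      simp [initAug, initD, dd_apply]

/-- The initial stage. -/
noncomputable def initStage (X : CochainComplex (ModuleCat.{u} R) ℤ) : Stage X where
  P := initP X
  g := initg X
  proj n := inferInstanceAs
    (Module.Projective R ((X.X n →₀ R) × ((Σ m : ℤ, X.X m) →₀ R)))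
  surj n x := ⟨((Finsupp.single x 1, 0) : (X.X n →₀ R) × ((Σ m : ℤ, X.X m) →₀ R)), by
    change initAug X n _ = x
    simp [initAug]⟩

end stages

section limit
variable {R : Type u} [Ring R] {X : CochainComplex (ModuleCat.{u} R) ℤ}

/-- The sequence of stages. -/
noncomputable def seq (hX : ∀ n : ℤ, IsFlat R ↥(X.X n)) : ℕ → Stage X
  | 0 => initStage X
  | i + 1 => step hX (seq hX i)

/-- The transition maps of the sequence. -/
noncomputable def seqι (hX : ∀ n : ℤ, IsFlat R ↥(X.X n)) (i : ℕ) :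
    (seq hX i).P ⟶ (seq hX (i + 1)).P := stepι hX (seq hX i)

lemma seqι_g (hX : ∀ n : ℤ, IsFlat R ↥(X.X n)) (i : ℕ) :
    seqι hX i ≫ (seq hX (i + 1)).g = (seq hX i).g := stepι_stepg hX (seq hX i)

lemma seq_lift (hX : ∀ n : ℤ, IsFlat R ↥(X.X n)) (i : ℕ) (n : ℤ) {A B : ModuleCat.{u} R}
    (e : A ⟶ B) (he : Function.Surjective e.hom) (b : (seq hX (i + 1)).P.X n ⟶ B)
    (h : (seq hX i).P.X n ⟶ A) (hh : h ≫ e = (seqι hX i).f n ≫ b) :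
    ∃ h' : (seq hX (i + 1)).P.X n ⟶ A, h' ≫ e = b ∧ (seqι hX i).f n ≫ h' = h :=
  step_lift hX (seq hX i) n e he b h hh

lemma seq_solve (hX : ∀ n : ℤ, IsFlat R ↥(X.X n)) (i : ℕ) (n : ℤ) (k : ℕ) (x : Fin k → R)
    (z : Fin k → (seq hX i).P.X (n + 1)) (hg : ∀ j, ((seq hX i).g.f (n + 1)).hom (z j) = 0)
    (hd : ∀ j, ((seq hX i).P.d (n + 1) (n + 1 + 1)).hom (z j) = 0) (hx : ∑ j, x j • z j = 0) :
    ∃ (l : ℕ) (a : Fin k → Fin l → R) (w : Fin l → (seq hX (i + 1)).P.X n),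
      (∀ t, ((seq hX (i + 1)).g.f n).hom (w t) = 0) ∧
      (∀ j, ((seqι hX i).f (n + 1)).hom (z j) =
        ∑ t, a j t • ((seq hX (i + 1)).P.d n (n + 1)).hom (w t)) ∧
      ∀ t, ∑ j, x j * a j t = 0 :=
  step_solve hX (seq hX i) n k x z hg hd hx

/-- The tower of complexes. -/
noncomputable def tower (hX : ∀ n : ℤ, IsFlat R ↥(X.X n)) :
    ℕ ⥤ CochainComplex (ModuleCat.{u} R) ℤ :=
  Functor.ofSequence (X := fun i => (seq hX i).P) (fun i => seqι hX i)

lemma tower_map_succ (hX : ∀ n : ℤ, IsFlat R ↥(X.X n)) (i : ℕ) :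
    (tower hX).map (homOfLE (Nat.le_add_right i 1)) = seqι hX i :=
  Functor.ofSequence_map_homOfLE_succ _ i

/-- The augmentation of the tower. -/
noncomputable def towerAug (hX : ∀ n : ℤ, IsFlat R ↥(X.X n)) :
    tower hX ⟶ (Functor.const ℕ).obj X :=
  NatTrans.ofSequence (fun i => (seq hX i).g) (fun i => by
    rw [tower_map_succ]
    exact (seqι_g hX i).trans (Category.comp_id _).symm)

/-- The colimit. -/
noncomputable def limP (hX : ∀ n : ℤ, IsFlat R ↥(X.X n)) : CochainComplex (ModuleCat.{u} R) ℤ :=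
  colimit (tower hX)

/-- The maps to the colimit. -/
noncomputable def limι (hX : ∀ n : ℤ, IsFlat R ↥(X.X n)) (i : ℕ) : (seq hX i).P ⟶ limP hX :=
  colimit.ι (tower hX) i

/-- The augmentation of the colimit. -/
noncomputable def limg (hX : ∀ n : ℤ, IsFlat R ↥(X.X n)) : limP hX ⟶ X :=
  colimit.desc (tower hX) ⟨X, towerAug hX⟩

lemma limι_limg (hX : ∀ n : ℤ, IsFlat R ↥(X.X n)) (i : ℕ) :
    limι hX i ≫ limg hX = (seq hX i).g :=
  colimit.ι_desc _ _

lemma tower_w (hX : ∀ n : ℤ, IsFlat R ↥(X.X n)) (i : ℕ) :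
    seqι hX i ≫ limι hX (i + 1) = limι hX i := by
  rw [← tower_map_succ]
  exact colimit.w (tower hX) _

/-- Degreewise colimit. -/
noncomputable def isColim (hX : ∀ n : ℤ, IsFlat R ↥(X.X n)) (n : ℤ) :
    IsColimit ((HomologicalComplex.eval (ModuleCat.{u} R) (ComplexShape.up ℤ) n).mapCocone
      (colimit.cocone (tower hX))) :=
  isColimitOfPreserves _ (colimit.isColimit _)

lemma lim_surj (hX : ∀ n : ℤ, IsFlat R ↥(X.X n)) (n : ℤ) :
    Function.Surjective ((limg hX).f n).hom := by
  intro x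
  obtain ⟨p, hp⟩ := (seq hX 0).surj n x
  refine ⟨((limι hX 0).f n).hom p, ?_⟩
  rw [← hp, ← limι_limg hX 0]
  rfl

lemma lim_proj (hX : ∀ n : ℤ, IsFlat R ↥(X.X n)) (n : ℤ) : Projective ((limP hX).X n) := by
  refine ⟨fun {B A} b e he => ?_⟩
  have he' : Function.Surjective e.hom := (ModuleCat.epi_iff_surjective e).1 he
  have h0 : ∃ h : (seq hX 0).P.X n ⟶ B, h ≫ e = (limι hX 0).f n ≫ b := by
    have := (seq hX 0).proj n
    obtain ⟨c, hc⟩ := Module.projective_lifting_property e.hom ((limι hX 0).f n ≫ b).hom he'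
    exact ⟨ModuleCat.ofHom c, ModuleCat.hom_ext hc⟩
  have hs : ∀ (i : ℕ) (h : {h : (seq hX i).P.X n ⟶ B // h ≫ e = (limι hX i).f n ≫ b}),
      ∃ h' : (seq hX (i + 1)).P.X n ⟶ B, h' ≫ e = (limι hX (i + 1)).f n ≫ b ∧
        (seqι hX i).f n ≫ h' = h.1 := by
    intro i h
    refine seq_lift hX i n e he' _ h.1 ?_
    rw [h.2, ← tower_w hX i]
    simp
  choose nx hn1 hn2 using hs
  let H : ∀ i, {h : (seq hX i).P.X n ⟶ B // h ≫ e = (limι hX i).f n ≫ b} := fun i =>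
    Nat.rec ⟨h0.choose, h0.choose_spec⟩ (fun i h => ⟨nx i h, hn1 i h⟩) i
  let T : tower hX ⋙ HomologicalComplex.eval (ModuleCat.{u} R) (ComplexShape.up ℤ) n ⟶
      (Functor.const ℕ).obj B :=
    NatTrans.ofSequence (fun i => (H i).1) (fun i => by
      simp only [Functor.comp_map, tower_map_succ]
      exact (hn2 i (H i)).trans (Category.comp_id _).symm)
  refine ⟨(isColim hX n).desc ⟨B, T⟩, ?_⟩
  refine (isColim hX n).hom_ext fun i => ?_
  refine (Category.assoc _ _ _).symm.trans ?_
  refine Eq.trans ?_ (H i).2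
  exact congrArg (fun t => t ≫ e) ((isColim hX n).fac ⟨B, T⟩ i)

instance : PreservesColimitsOfShape ℕ (forget (ModuleCat.{u} R)) :=
  have := preservesFilteredColimitsOfSize_shrink.{0, u, 0, u} (forget (ModuleCat.{u} R))
  PreservesFilteredColimitsOfSize.preserves_filtered_colimits ℕ

lemma lim_rep (hX : ∀ n : ℤ, IsFlat R ↥(X.X n)) (n : ℤ) (p : (limP hX).X n) :
    ∃ (i : ℕ) (q : (seq hX i).P.X n), ((limι hX i).f n).hom q = p :=
  Concrete.isColimit_exists_rep _ (isColim hX n) p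

/-- Transition maps. -/
noncomputable def tr (hX : ∀ n : ℤ, IsFlat R ↥(X.X n)) {i j : ℕ} (h : i ≤ j) :
    (seq hX i).P ⟶ (seq hX j).P := (tower hX).map (homOfLE h)

lemma tr_lim (hX : ∀ n : ℤ, IsFlat R ↥(X.X n)) {i j : ℕ} (h : i ≤ j) :
    tr hX h ≫ limι hX j = limι hX i := colimit.w (tower hX) _

lemma tr_lim_apply (hX : ∀ n : ℤ, IsFlat R ↥(X.X n)) {i j : ℕ} (h : i ≤ j) (n : ℤ)
    (q : (seq hX i).P.X n) :
    ((limι hX j).f n).hom (((tr hX h).f n).hom q) = ((limι hX i).f n).hom q := by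
  rw [← tr_lim hX h]
  rfl

lemma tr_tr (hX : ∀ n : ℤ, IsFlat R ↥(X.X n)) {i j k : ℕ} (h : i ≤ j) (h' : j ≤ k) (n : ℤ)
    (q : (seq hX i).P.X n) :
    ((tr hX h').f n).hom (((tr hX h).f n).hom q) = ((tr hX (h.trans h')).f n).hom q := by
  have : tr hX (h.trans h') = tr hX h ≫ tr hX h' := 
    (tower hX).map_comp (homOfLE h) (homOfLE h')
  rw [this]
  rfl

lemma lim_zero (hX : ∀ n : ℤ, IsFlat R ↥(X.X n)) (n : ℤ) (i : ℕ) (q : (seq hX i).P.X n)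
    (hq : ((limι hX i).f n).hom q = 0) :
    ∃ (j : ℕ) (h : i ≤ j), ((tr hX h).f n).hom q = 0 := by
  obtain ⟨j, f, g, h⟩ := Concrete.isColimit_exists_of_rep_eq
    (tower hX ⋙ HomologicalComplex.eval (ModuleCat.{u} R) (ComplexShape.up ℤ) n)
    (isColim hX n) (i := i) (j := i) q 0 (by
      refine hq.trans ?_
      exact (map_zero ((limι hX i).f n).hom).symm)
  refine ⟨j, leOfHom f, h.trans ?_⟩
  exact map_zero ((tr hX (leOfHom g)).f n).hom

lemma lim_zero_fin (hX : ∀ n : ℤ, IsFlat R ↥(X.X n)) (n : ℤ) (i : ℕ) (k : ℕ)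
    (q : Fin k → (seq hX i).P.X n) (hq : ∀ t, ((limι hX i).f n).hom (q t) = 0) :
    ∃ (j : ℕ) (h : i ≤ j), ∀ t, ((tr hX h).f n).hom (q t) = 0 := by
  choose j h hj using fun t => lim_zero hX n i (q t) (hq t)
  refine ⟨i + ∑ t, j t, Nat.le_add_right _ _, fun t => ?_⟩
  have h1 : j t ≤ i + ∑ t, j t :=
    (Finset.single_le_sum (fun _ _ => Nat.zero_le _) (Finset.mem_univ t)).trans
      (Nat.le_add_left _ _)
  rw [← tr_tr hX (h t) h1, hj, map_zero]

lemma lim_rep_fin (hX : ∀ n : ℤ, IsFlat R ↥(X.X n)) (n : ℤ) (k : ℕ)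
    (p : Fin k → (limP hX).X n) :
    ∃ (i : ℕ) (q : Fin k → (seq hX i).P.X n), ∀ t, ((limι hX i).f n).hom (q t) = p t := by
  choose j q hq using fun t => lim_rep hX n (p t)
  have h1 : ∀ t, j t ≤ ∑ t, j t := fun t =>
    Finset.single_le_sum (fun _ _ => Nat.zero_le _) (Finset.mem_univ t)
  refine ⟨∑ t, j t, fun t => ((tr hX (h1 t)).f n).hom (q t), fun t => ?_⟩
  rw [tr_lim_apply, hq]

lemma lim_g_apply (hX : ∀ n : ℤ, IsFlat R ↥(X.X n)) (n : ℤ) (i : ℕ) (q : (seq hX i).P.X n) :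
    ((limg hX).f n).hom (((limι hX i).f n).hom q) = ((seq hX i).g.f n).hom q := by
  rw [← limι_limg hX i]
  rfl

lemma lim_solve (hX : ∀ n : ℤ, IsFlat R ↥(X.X n)) (n : ℤ) (k : ℕ) (x : Fin k → R)
    (z : Fin k → (limP hX).X (n + 1)) (hg : ∀ j, ((limg hX).f (n + 1)).hom (z j) = 0)
    (hd : ∀ j, ((limP hX).d (n + 1) (n + 1 + 1)).hom (z j) = 0) (hx : ∑ j, x j • z j = 0) :
    ∃ (l : ℕ) (a : Fin k → Fin l → R) (w : Fin l → (limP hX).X n),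
      (∀ i, ((limg hX).f n).hom (w i) = 0) ∧
      (∀ j, z j = ∑ i, a j i • ((limP hX).d n (n + 1)).hom (w i)) ∧
      ∀ i, ∑ j, x j * a j i = 0 := by
  obtain ⟨i₀, q₀, h₀⟩ := lim_rep_fin hX (n + 1) k z
  obtain ⟨i₁, l₁, h₁⟩ := lim_zero_fin hX (n + 1 + 1) i₀ k
    (fun t => ((seq hX i₀).P.d (n + 1) (n + 1 + 1)).hom (q₀ t)) (fun t => by
      rw [comm_apply, h₀, hd])
  obtain ⟨i₂, l₂, h₂⟩ := lim_zero hX (n + 1) i₁ (∑ j, x j • ((tr hX l₁).f (n + 1)).hom (q₀ j)) (by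
    rw [map_sum, ← hx]
    refine Finset.sum_congr rfl fun j _ => ?_
    rw [map_smul, tr_lim_apply, h₀])
  obtain ⟨l, a, w, e1, e2, e3⟩ := seq_solve hX i₂ n k x
    (fun j => ((tr hX (l₁.trans l₂)).f (n + 1)).hom (q₀ j))
    (fun j => by rw [← lim_g_apply, tr_lim_apply, h₀, hg])
    (fun j => by
      rw [← comm_apply, ← tr_tr hX l₁ l₂, h₁, map_zero])
    (by
      rw [← h₂, map_sum]
      refine Finset.sum_congr rfl fun j _ => ?_
      rw [map_smul, tr_tr])
  refine ⟨l, a, fun i => ((limι hX (i₂ + 1)).f n).hom (w i), fun i => ?_, fun j => ?_, e3⟩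
  · exact (lim_g_apply hX n _ _).trans (e1 i)
  · have h3 := congrArg ((limι hX (i₂ + 1)).f (n + 1)).hom (e2 j)
    have h4 : ((limι hX (i₂ + 1)).f (n + 1)).hom (((seqι hX i₂).f (n + 1)).hom
        (((tr hX (l₁.trans l₂)).f (n + 1)).hom (q₀ j))) = z j := by
      rw [← h₀ j, ← tr_lim_apply hX (l₁.trans l₂), ← tower_w hX i₂]
      rfl
    rw [← h4]
    refine h3.trans ?_
    rw [map_sum]
    refine Finset.sum_congr rfl fun i _ => ?_
    rw [map_smul]
    congr 1
    exact comm_apply (limι hX (i₂ + 1)) n (n + 1) (w i)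

end limit
end Neeman

/-- **(Neeman.)**  Let `R` be a ring and `X` a cochain complex of flat `R`-modules.
Then there exists a degreewise short exact sequence of cochain complexes
`0 → W → P → X → 0` such that every component `Pⁿ` is a projective `R`-module and `W`
is an acyclic complex of flat `R`-modules all of whose cycle modules
`Zⁿ(W) = ker(Wⁿ → W^{n+1})` are flat. -/
theorem stmt_16 (R : Type u) [Ring R]
    (X : CochainComplex (ModuleCat.{u} R) ℤ)
    (hX : ∀ n : ℤ, IsFlat R ↥(X.X n)) :
    ∃ (W P : CochainComplex (ModuleCat.{u} R) ℤ) (f : W ⟶ P) (g : P ⟶ X)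
      (w : f ≫ g = 0),
      (∀ n : ℤ, (ShortComplex.mk (f.f n) (g.f n)
        (by rw [← HomologicalComplex.comp_f, w]; rfl)).ShortExact) ∧
      (∀ n : ℤ, Projective (P.X n)) ∧
      (∀ n : ℤ, W.ExactAt n) ∧
      (∀ n : ℤ, IsFlat R ↥(W.X n)) ∧
      (∀ n : ℤ, IsFlat R ↥(W.cycles n)) := by
  let g := Neeman.limg hX
  have hepi : ∀ n, Epi (g.f n) := fun n =>
    (ModuleCat.epi_iff_surjective _).2 (Neeman.lim_surj hX n)
  have hg : Epi g := HomologicalComplex.epi_of_epi_f _ hepi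
  let W := kernel g
  let f : W ⟶ Neeman.limP hX := kernel.ι g
  have w : f ≫ g = 0 := kernel.condition g
  have hS : (ShortComplex.mk f g w).ShortExact :=
    { exact := ShortComplex.exact_of_f_is_kernel _ (kernelIsKernel g)
      mono_f := inferInstanceAs (Mono (kernel.ι g))
      epi_g := hg }
  have hSn : ∀ n : ℤ, (ShortComplex.mk (f.f n) (g.f n)
        (by rw [← HomologicalComplex.comp_f, w]; rfl)).ShortExact := fun n =>
    hS.map_of_exact (HomologicalComplex.eval (ModuleCat.{u} R) (ComplexShape.up ℤ) n)
  have finj : ∀ n, Function.Injective (f.f n).hom := fun n =>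
    (ModuleCat.mono_iff_injective _).1 (hSn n).mono_f
  have fex : ∀ n (p : (Neeman.limP hX).X n), (g.f n).hom p = 0 → ∃ v, (f.f n).hom v = p :=
    fun n p hp => (ShortComplex.moduleCat_exact_iff _).1 (hSn n).exact p hp
  have gf : ∀ n (v : W.X n), (g.f n).hom ((f.f n).hom v) = 0 := fun n v =>
    congrArg (fun t : W ⟶ X => (t.f n).hom v) w
  -- the key property, in `W`
  have key : ∀ (n : ℤ) (k : ℕ) (x : Fin k → R) (z : Fin k → W.X (n + 1))
      (_ : ∀ j, (W.d (n + 1) (n + 1 + 1)).hom (z j) = 0) (_ : ∑ j, x j • z j = 0),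
      ∃ (l : ℕ) (a : Fin k → Fin l → R) (v : Fin l → W.X n),
        (∀ j, z j = ∑ i, a j i • (W.d n (n + 1)).hom (v i)) ∧
        ∀ i, ∑ j, x j * a j i = 0 := by
    intro n k x z hd hx
    obtain ⟨l, a, u, h1, h2, h3⟩ := Neeman.lim_solve hX n k x
      (fun j => (f.f (n + 1)).hom (z j)) (fun j => gf _ _)
      (fun j => by rw [← Neeman.comm_apply, hd, map_zero]) (by
        have := congrArg (f.f (n + 1)).hom hx
        simpa using this)
    choose v hv using fun i => fex n (u i) (h1 i)
    refine ⟨l, a, v, fun j => finj _ ?_, h3⟩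
    rw [h2 j, map_sum]
    refine Finset.sum_congr rfl fun i _ => ?_
    rw [map_smul, Neeman.comm_apply, hv]
  refine ⟨W, Neeman.limP hX, f, g, w, hSn, Neeman.lim_proj hX, ?_, ?_, ?_⟩
  · intro n
    obtain ⟨n, rfl⟩ : ∃ m, n = m + 1 := ⟨n - 1, by ring⟩
    rw [HomologicalComplex.exactAt_iff' W n (n + 1) (n + 1 + 1) (by simp) (by simp),
      ShortComplex.moduleCat_exact_iff]
    intro (z : W.X (n + 1)) hz
    obtain ⟨l, a, v, h1, -⟩ := key n 1 (fun _ => 0) (fun _ => z) (fun _ => hz) (by simp)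
    have h2 : (W.d n (n + 1)).hom (∑ i, a 0 i • v i) = z := by
      rw [map_sum, h1 0]
      simp only [map_smul]
    exact ⟨_, h2⟩
  · intro n k x m h
    have : Module.Projective R ((Neeman.limP hX).X n) :=
      (IsProjective.iff_projective _).2 (Neeman.lim_proj hX n)
    obtain ⟨l, a, y, h1, h2⟩ := Neeman.flat_ker (hX n) (g.f n).hom (Neeman.lim_surj hX n) k x
      (fun j => ⟨(f.f n).hom (m j), gf _ _⟩) (by
        ext
        have := congrArg (f.f n).hom h
        simpa using this)
    choose v hv using fun i => fex n (y i) (y i).2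
    refine ⟨l, a, v, fun j => finj _ ?_, h2⟩
    have := congrArg Subtype.val (h1 j)
    simpa [hv] using this
  · intro n
    obtain ⟨n, rfl⟩ : ∃ m, n = m + 1 := ⟨n - 1, by ring⟩
    intro k x z h
    have iinj : Function.Injective (W.iCycles (n + 1)).hom :=
      (ModuleCat.mono_iff_injective _).1 inferInstance
    obtain ⟨l, a, v, h1, h2⟩ := key n k x (fun j => (W.iCycles (n + 1)).hom (z j)) (fun j =>
      congrArg (fun t => t.hom (z j)) (W.iCycles_d (n + 1) (n + 1 + 1))) (by
        have := congrArg (W.iCycles (n + 1)).hom h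
        simpa using this)
    refine ⟨l, a, fun i => (W.toCycles n (n + 1)).hom (v i), fun j => iinj ?_, h2⟩
    rw [h1 j, map_sum]
    refine Finset.sum_congr rfl fun i _ => ?_
    rw [map_smul]
    congr 1
    exact congrArg (fun t => t.hom (v i)) (W.toCycles_i n (n + 1)).symm
end
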